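/- Cauchy's estimates: assume m > 4. Let α, β ∈ ℕ^m be multi-indices. There exists a constant c_{α,β,m,k} > 0, depending only on α, β, m, k, with the following property: for every open set Ω ⊆ ℝ^m and every f ∈ C²(Ω×𝔹^m, ℋ_k) with 𝒟_k f = 0 in Ω × 𝔹^m, the function f is infinitely differentiable in (x,ν) on Ω × 𝔹^m, and for every a ∈ Ω, ν₀ ∈ 𝔹^m, and r₁, r₂ > 0 with the closed ball B̄(a,r₁) contained in Ω and the closed ball B̄(ν₀,r₂) contained in 𝔹^m, one has |D_ν^β D_x^α f(a,ν₀)| ≤ c_{α,β,m,k} · sup_{B(a,r₁)×B(ν₀,r₂)} |f| / (r₁^{|α|} r₂^{|β|}). -/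

import Mathlib

noncomputable section

open MeasureTheory Metric Filter Topology
open scoped RealInnerProductSpace

/-- `ℝ^m` as a Euclidean space. -/
abbrev Evec (m : ℕ) : Type := EuclideanSpace ℝ (Fin m)

/-- Partial derivative in the `i`-th coordinate direction. -/
def pdv {m : ℕ} (i : Fin m) (f : Evec m → ℝ) (x : Evec m) : ℝ :=
  fderiv ℝ f x (EuclideanSpace.single i 1)

/-- Euclidean Laplacian on `ℝ^m`. -/
def lapl {m : ℕ} (f : Evec m → ℝ) (x : Evec m) : ℝ :=
  ∑ i : Fin m, pdv i (pdv i f) x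

/-- `p` is a real-valued polynomial function on `ℝ^m`, homogeneous of degree `k` and
harmonic; i.e. `p ∈ ℋ_k`. -/
def IsHk (m k : ℕ) (p : Evec m → ℝ) : Prop :=
  (∃ P : MvPolynomial (Fin m) ℝ, ∀ x : Evec m, p x = MvPolynomial.eval (fun i => x i) P) ∧
  (∀ (c : ℝ) (x : Evec m), p (c • x) = c ^ k * p x) ∧
  (∀ x : Evec m, lapl p x = 0)

/-- The surface measure `dS` on the unit sphere `𝕊^{m-1}`, as a measure on `ℝ^m`. -/
def sphereM (m : ℕ) : Measure (Evec m) :=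
  Measure.map Subtype.val ((volume : Measure (Evec m)).toSphere)

/-- `ω_m`, the surface area of the unit sphere `𝕊^{m-1}`. -/
def omegaS (m : ℕ) : ℝ := (sphereM m Set.univ).toReal

/-- The constant `c_{m,k} = 2(m+2k-2)/((m-2)ω_m)`. -/
def cmk (m k : ℕ) : ℝ := 2 * ((m : ℝ) + 2 * k - 2) / (((m : ℝ) - 2) * omegaS m)

/-- The reflection `R_a(u) = u - 2⟨a,u⟩a/|a|²` (in Clifford notation `a u a/|a|²`). -/
def reflv {m : ℕ} (a u : Evec m) : Evec m :=
  u - (2 * ⟪a, u⟫ / ‖a‖ ^ 2) • a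

/-- `dim ℋ_k`. -/
def hdim (m k : ℕ) : ℕ :=
  Nat.choose (m + k - 1) (m - 1) - Nat.choose (m + k - 3) (m - 1)

/-- `Z` is the reproducing kernel `Z_k` of `ℋ_k` on the unit sphere: a symmetric,
rotation invariant kernel, bounded by `dim ℋ_k` on the unit ball, belonging to `ℋ_k`
in the first variable and reproducing elements of `ℋ_k` from their spherical values. -/
def IsZk (m k : ℕ) (Z : Evec m → Evec m → ℝ) : Prop :=
  (∀ v : Evec m, IsHk m k (fun u => Z u v)) ∧
  (∀ p : Evec m → ℝ, IsHk m k p → ∀ v : Evec m, (∫ u, Z u v * p u ∂(sphereM m)) = p v) ∧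
  (∀ u v : Evec m, Z u v = Z v u) ∧
  (∀ u v : Evec m, ‖u‖ ≤ 1 → ‖v‖ ≤ 1 → |Z u v| ≤ (hdim m k : ℝ)) ∧
  (∀ (A : Evec m ≃ₗᵢ[ℝ] Evec m) (u v : Evec m), Z (A u) (A v) = Z u v)

/-- The point `(x', y) ∈ ℝ^{d+1}` with first `d` coordinates `x'` and last coordinate `y`. -/
def upP (d : ℕ) (x' : Evec d) (y : ℝ) : Evec (d + 1) :=
  (EuclideanSpace.equiv (Fin (d + 1)) ℝ).symm
    (Fin.snoc (⇑(EuclideanSpace.equiv (Fin d) ℝ) x') y)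

/-- The first `d` coordinates of a point of `ℝ^{d+1}`. -/
def downP (d : ℕ) (x : Evec (d + 1)) : Evec d :=
  (EuclideanSpace.equiv (Fin d) ℝ).symm (fun i => x (Fin.castSucc i))

/-- The last coordinate of a point of `ℝ^{d+1}`. -/
def lastP (d : ℕ) (x : Evec (d + 1)) : ℝ := x (Fin.last d)

/-- The Poisson kernel `P_H` for bosonic Laplacians in the upper half-space `ℝ^{d+1}_+`,
`P_H(x,t,u,v) = c_{m,k} (y/|x-t|^m) Z_k(R_{x-t}(u), v)` with `m = d+1`, `x = (x',y)`,
`t = (t',0)`. -/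
def PH (d k : ℕ) (Z : Evec (d + 1) → Evec (d + 1) → ℝ) (x' : Evec d) (y : ℝ)
    (t' : Evec d) (u v : Evec (d + 1)) : ℝ :=
  cmk (d + 1) k * (y / ‖upP d x' y - upP d t' 0‖ ^ (d + 1)) *
    Z (reflv (upP d x' y - upP d t' 0) u) v

/-- The Poisson integral `P_H[f]` in the upper half-space. -/
def PHint (d k : ℕ) (Z : Evec (d + 1) → Evec (d + 1) → ℝ)
    (f : Evec d → Evec (d + 1) → ℝ) (x' : Evec d) (y : ℝ) (v : Evec (d + 1)) : ℝ :=
  ∫ t' : Evec d, (∫ u, PH d k Z x' y t' u v * f t' u ∂(sphereM (d + 1)))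

/-- The Poisson kernel `P_B` for bosonic Laplacians in the unit ball. -/
def PB (m k : ℕ) (Z : Evec m → Evec m → ℝ) (x ζ ω ν : Evec m) : ℝ :=
  (cmk m k / 2) * ((1 - ‖x‖ ^ 2) / ‖x - ζ‖ ^ m) * Z (reflv (x - ζ) ω) ν

/-- The Poisson integral `P_B[h]` in the unit ball. -/
def PBint (m k : ℕ) (Z : Evec m → Evec m → ℝ) (h : Evec m → Evec m → ℝ)
    (x ν : Evec m) : ℝ :=
  ∫ ζ, (∫ ω, PB m k Z x ζ ω ν * h ζ ω ∂(sphereM m)) ∂(sphereM m)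

/-- Partial derivative in the first (`x`) variable. -/
def pd1 {m : ℕ} (i : Fin m) (f : Evec m → Evec m → ℝ) : Evec m → Evec m → ℝ :=
  fun x u => fderiv ℝ (fun x₁ => f x₁ u) x (EuclideanSpace.single i 1)

/-- Partial derivative in the second (`u`) variable. -/
def pd2 {m : ℕ} (i : Fin m) (f : Evec m → Evec m → ℝ) : Evec m → Evec m → ℝ :=
  fun x u => fderiv ℝ (fun u₁ => f x u₁) u (EuclideanSpace.single i 1)

/-- The bosonic Laplacian `𝒟_k`. -/
def Dk (m k : ℕ) (f : Evec m → Evec m → ℝ) : Evec m → Evec m → ℝ := fun x u =>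
  (∑ i : Fin m, pd1 i (pd1 i f) x u)
    - (4 / ((m : ℝ) + 2 * k - 2)) *
        ∑ i : Fin m, ∑ j : Fin m, u i * pd1 i (pd2 j (pd1 j f)) x u
    + (4 * ‖u‖ ^ 2 / (((m : ℝ) + 2 * k - 2) * ((m : ℝ) + 2 * k - 4))) *
        ∑ i : Fin m, ∑ j : Fin m, pd2 i (pd1 i (pd2 j (pd1 j f))) x u

/-- `f ∈ C²(Ω×𝔹^m, ℋ_k)`: twice continuously differentiable on `Ω × 𝔹^m` and, for each
fixed `x ∈ Ω`, coinciding in the second variable with an element of `ℋ_k`. -/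
def C2Hk (m k : ℕ) (Ω : Set (Evec m)) (f : Evec m → Evec m → ℝ) : Prop :=
  ContDiffOn ℝ 2 (fun q : Evec m × Evec m => f q.1 q.2) (Ω ×ˢ ball (0 : Evec m) 1) ∧
  ∀ x ∈ Ω, ∃ q, IsHk m k q ∧ ∀ u ∈ closedBall (0 : Evec m) 1, f x u = q u

/-- The `L^p` norm `(∫_{ℝ^{m-1}} ∫_{𝕊^{m-1}} |f(x',u)|^p dS(u) dx')^{1/p}` (`m = d+1`),
valued in `ℝ≥0∞`. -/
def lpH (d : ℕ) (p : ℝ) (f : Evec d → Evec (d + 1) → ℝ) : ENNReal :=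
  (∫⁻ x' : Evec d, ∫⁻ u, ENNReal.ofReal (|f x' u| ^ p) ∂(sphereM (d + 1))) ^ (1 / p)

/-- `f ∈ L^p(ℝ^{m-1}×𝔹^m, ℋ_k)` (`m = d+1`). -/
def MemLpH (d k : ℕ) (p : ℝ) (f : Evec d → Evec (d + 1) → ℝ) : Prop :=
  Measurable (fun q : Evec d × Evec (d + 1) => f q.1 q.2) ∧
  (∀ x' : Evec d, ∃ q, IsHk (d + 1) k q ∧
    ∀ u ∈ closedBall (0 : Evec (d + 1)) 1, f x' u = q u) ∧
  lpH d p f < ⊤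

/-- The `L^p` norm `(∫_{𝕊^{m-1}} ∫_{𝕊^{m-1}} |h(ζ,ω)|^p dS(ω) dS(ζ))^{1/p}`,
valued in `ℝ≥0∞`. -/
def lpS (m : ℕ) (p : ℝ) (h : Evec m → Evec m → ℝ) : ENNReal :=
  (∫⁻ ζ, ∫⁻ ω, ENNReal.ofReal (|h ζ ω| ^ p) ∂(sphereM m) ∂(sphereM m)) ^ (1 / p)

/-- `h ∈ L^p(𝕊^{m-1}×𝔹^m, ℋ_k)`. -/
def MemLpS (m k : ℕ) (p : ℝ) (h : Evec m → Evec m → ℝ) : Prop :=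
  Measurable (fun q : Evec m × Evec m => h q.1 q.2) ∧
  (∀ ζ : Evec m, ‖ζ‖ = 1 → ∃ q, IsHk m k q ∧
    ∀ ω ∈ closedBall (0 : Evec m) 1, h ζ ω = q ω) ∧
  lpS m p h < ⊤

/-- Iterated partial derivative `D_x^α` in the first variable, for a multi-index `α ∈ ℕ^m`. -/
def Dx {m : ℕ} (α : Fin m → ℕ) (f : Evec m → Evec m → ℝ) : Evec m → Evec m → ℝ :=
  (List.finRange m).foldr (fun i g => (pd1 i)^[α i] g) f

/-- Iterated partial derivative `D_ν^β` in the second variable, for a multi-index `β ∈ ℕ^m`. -/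
def Dv {m : ℕ} (β : Fin m → ℕ) (f : Evec m → Evec m → ℝ) : Evec m → Evec m → ℝ :=
  (List.finRange m).foldr (fun i g => (pd2 i)^[β i] g) f

/-!
Write `f(x, u) = ∑ᵢ cᵢ(x) bᵢ(u)` with the `bᵢ` in `ℋ_k`. The equation `𝒟_k f = 0` is a system of
second-order equations for the `cᵢ` with constant coefficients (they depend on `u` only), hence it
is preserved by mollification and it suffices to study smooth solutions.

The operators `∂_x`, `∂_u` and multiplication by `u` satisfy the Weyl relations, and
`B = ⟨∂_u, ∂_x⟩` intertwines `𝒟_k` with the same operator of lower parameter: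
`B L(K) = L(K - 2) B` for `L(K) = K(K - 2) Δ_x - 4(K - 2) ⟨u, ∂_x⟩ B + 4 |u|² B²`, where
`L(m + 2k - 2)` is a multiple of `𝒟_k`. As `B` lowers the degree in `u`, `B^(k+1) f = 0`, and an
induction gives `Δ_x^(k+1) f = 0` as long as no denominator `K` vanishes.

On a ball, the average of a polyharmonic function against a dilated radial bump is a polynomial in
the square of the dilation, so a linear combination of finitely many such averages extrapolates to
the value at the centre. This reproducing formula passes to uniform limits, and differentiating its
kernel yields both smoothness and the Cauchy estimate in `x`. The estimate in `u` is the same one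
for harmonic functions, applied to `D_x^α f(a, ·)`, which again lies in `ℋ_k`.
-/

open scoped ContDiff Convolution

section DirectionalDerivative

variable {F : Type*} [NormedAddCommGroup F] [NormedSpace ℝ F] {g : F → ℝ}

/-- The derivative of `g` in the direction `v`, as a function of the base point. The coordinate
derivatives `pdv i` are definitionally of this form. -/
def dirDeriv (v : F) (g : F → ℝ) : F → ℝ := fun x => fderiv ℝ g x v

theorem contDiff_dirDeriv (hg : ContDiff ℝ ∞ g) (v : F) : ContDiff ℝ ∞ (dirDeriv v g) :=
  (hg.fderiv_right (m := ∞) (by simp)).clm_apply contDiff_const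

theorem dirDeriv_comp_add_smul (v : F) (g : F → ℝ) (a : F) (t : ℝ) :
    dirDeriv v (fun y => g (a + t • y)) = fun y => t * dirDeriv v g (a + t • y) := by
  ext y
  have hsmul := fderiv_comp_smul (𝕜 := ℝ) (f := fun z => g (a + z)) (x := y) t
  simp only [dirDeriv, hsmul, fderiv_comp_add_left, smul_apply, smul_eq_mul]

end DirectionalDerivative

section Laplacian

variable {m : ℕ} {g : Evec m → ℝ}

theorem contDiff_lapl (hg : ContDiff ℝ ∞ g) : ContDiff ℝ ∞ (lapl g) :=
  ContDiff.sum fun _ _ => contDiff_dirDeriv (contDiff_dirDeriv hg _) _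

end Laplacian

section DilationAverage

variable {E : Type*} [NormedAddCommGroup E] [NormedSpace ℝ E]

/-- The average of `g` about the point `a` against the weight `φ` dilated by `t`. For `t > 0` it
involves only the values of `g` on the image of the support of `φ` under `y ↦ a + t • y`. -/
def dilationAverage [MeasureSpace E] (g φ : E → ℝ) (a : E) (t : ℝ) : ℝ :=
  ∫ y, g (a + t • y) * φ y

theorem hasDerivAt_dilationAverage [MeasureSpace E] [OpensMeasurableSpace E]
    [IsFiniteMeasureOnCompacts (volume : Measure E)] {g φ : E → ℝ} (hg : ContDiff ℝ 1 g)
    (hφ : Continuous φ) (hφs : HasCompactSupport φ) (a : E) (t : ℝ) :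
    HasDerivAt (dilationAverage g φ a) (∫ y, fderiv ℝ g (a + t • y) y * φ y) t := by
  have : Continuous (fderiv ℝ g) := hg.continuous_fderiv one_ne_zero
  have hcont : Continuous fun p : ℝ × E => fderiv ℝ g (a + p.1 • p.2) p.2 * φ p.2 := by fun_prop
  obtain ⟨C, hC⟩ := ((isCompact_closedBall t 1).prod hφs).exists_bound_of_continuousOn
    hcont.continuousOn
  have hint (s : ℝ) : Integrable fun y => g (a + s • y) * φ y :=
    Continuous.integrable_of_hasCompactSupport (by fun_prop) hφs.mul_left
  refine (hasDerivAt_integral_of_dominated_loc_of_deriv_le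
    (F := fun (t : ℝ) y => g (a + t • y) * φ y)
    (F' := fun (t : ℝ) y => fderiv ℝ g (a + t • y) y * φ y)
    (bound := (tsupport φ).indicator fun _ => C) (ball_mem_nhds t one_pos)
    (.of_forall fun s => (hint s).aestronglyMeasurable) (hint t)
    (Continuous.aestronglyMeasurable (by fun_prop)) (.of_forall fun y s hs => ?_) ?_
    (.of_forall fun y s _ => ?_)).2
  · by_cases hy : y ∈ tsupport φ
    · rw [Set.indicator_of_mem hy]
      exact hC (s, y) ⟨ball_subset_closedBall hs, hy⟩
    · simp [Set.indicator_of_notMem hy, image_eq_zero_of_notMem_tsupport hy]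
  · exact (integrable_indicator_iff hφs.isCompact.measurableSet).2
      (integrableOn_const hφs.isCompact.measure_lt_top.ne)
  · have hline : HasDerivAt (fun s : ℝ => a + s • y) y s := by
      simpa using ((hasDerivAt_id s).smul_const y).const_add a
    exact ((hg.differentiable one_ne_zero _).hasFDerivAt.comp_hasDerivAt s hline).mul_const _

theorem dilationAverage_dirDeriv_right [MeasureSpace E] [BorelSpace E] [FiniteDimensional ℝ E]
    [(volume : Measure E).IsAddHaarMeasure] {h φ : E → ℝ} (hh : ContDiff ℝ 1 h)
    (hφ : ContDiff ℝ 1 φ) (hφs : HasCompactSupport φ) (v a : E) (t : ℝ) :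
    dilationAverage h (dirDeriv v φ) a t = -(t * dilationAverage (dirDeriv v h) φ a t) := by
  have hc : Continuous h := hh.continuous
  have hh' : Continuous (dirDeriv v h) := (hh.continuous_fderiv one_ne_zero).clm_apply (by fun_prop)
  have : Continuous (dirDeriv v φ) := (hφ.continuous_fderiv one_ne_zero).clm_apply (by fun_prop)
  have haff : ContDiff ℝ 1 fun y => h (a + t • y) := hh.comp (by fun_prop)
  have hderiv (y : E) : fderiv ℝ (fun y => h (a + t • y)) y v = t * dirDeriv v h (a + t • y) :=
    congrFun (dirDeriv_comp_add_smul v h a t) y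
  simp only [dilationAverage, ← integral_const_mul, ← mul_assoc, ← hderiv]
  refine integral_mul_fderiv_eq_neg_fderiv_mul_of_integrable ?_ ?_ ?_
    (fun x _ => haff.differentiable one_ne_zero x) (fun x _ => hφ.differentiable one_ne_zero x)
  · simp only [hderiv]
    exact Continuous.integrable_of_hasCompactSupport (by fun_prop) hφs.mul_left
  · exact Continuous.integrable_of_hasCompactSupport (by fun_prop) (hφs.fderiv_apply ℝ v).mul_left
  · exact Continuous.integrable_of_hasCompactSupport (by fun_prop) hφs.mul_left

end DilationAverage

section UnitBallBump

/-- A smooth weight vanishing outside the open unit ball. -/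
structure IsUnitBallBump {E : Type*} [NormedAddCommGroup E] [NormedSpace ℝ E] (φ : E → ℝ) :
    Prop where
  contDiff : ContDiff ℝ ∞ φ
  eq_zero_of_one_le_norm : ∀ y, 1 ≤ ‖y‖ → φ y = 0

variable {E : Type*} [NormedAddCommGroup E] [NormedSpace ℝ E] {φ : E → ℝ}

theorem IsUnitBallBump.hasCompactSupport [FiniteDimensional ℝ E] (hφ : IsUnitBallBump φ) :
    HasCompactSupport φ :=
  have := FiniteDimensional.proper_real E
  HasCompactSupport.intro (isCompact_closedBall 0 1) fun y hy =>
    hφ.eq_zero_of_one_le_norm y (not_le.1 (mem_closedBall_zero_iff.not.1 hy)).le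

theorem add_smul_mem_ball {a y : E} {t r : ℝ} (ht : t ∈ Set.Icc 0 r) (hr : 0 < r) (hy : ‖y‖ < 1) :
    a + t • y ∈ ball a r := by
  rw [mem_ball_iff_norm, add_sub_cancel_left, norm_smul, Real.norm_of_nonneg ht.1]
  nlinarith [ht.1, ht.2, norm_nonneg y]

theorem IsUnitBallBump.sum_const_mul {ι : Type*} {s : Finset ι} {φ : ι → E → ℝ}
    (hφ : ∀ i ∈ s, IsUnitBallBump (φ i)) (w : ι → ℝ) :
    IsUnitBallBump fun y => ∑ i ∈ s, w i * φ i y where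
  contDiff := ContDiff.sum fun i hi => contDiff_const.mul (hφ i hi).contDiff
  eq_zero_of_one_le_norm y hy :=
    Finset.sum_eq_zero fun i hi => by rw [(hφ i hi).eq_zero_of_one_le_norm y hy, mul_zero]

theorem dilationAverage_sum_const_mul [FiniteDimensional ℝ E] [MeasureSpace E]
    [OpensMeasurableSpace E] [IsFiniteMeasureOnCompacts (volume : Measure E)] {g : E → ℝ}
    (hg : Continuous g) {ι : Type*} {s : Finset ι} {φ : ι → E → ℝ}
    (hφ : ∀ i ∈ s, IsUnitBallBump (φ i)) (w : ι → ℝ) (a : E) (t : ℝ) :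
    dilationAverage g (fun y => ∑ i ∈ s, w i * φ i y) a t
      = ∑ i ∈ s, w i * dilationAverage g (φ i) a t := by
  simp only [dilationAverage, Finset.mul_sum, mul_left_comm (g _)]
  rw [integral_finsetSum _ fun i hi => ?_]
  · simp only [integral_const_mul]
  · exact (((hg.comp (by fun_prop)).mul (hφ i hi).contDiff.continuous
      ).integrable_of_hasCompactSupport (hφ i hi).hasCompactSupport.mul_left).const_mul _

end UnitBallBump

section RadialAverage

/-- A smooth profile `Φ` for which the radial weight `y ↦ Φ (‖y‖ ^ 2)` vanishes off the unit ball;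
the squared norm keeps the weight smooth at the origin. -/
structure IsRadialProfile (Φ : ℝ → ℝ) : Prop where
  contDiff : ContDiff ℝ ∞ Φ
  eq_zero_of_one_le : ∀ s, 1 ≤ s → Φ s = 0

variable {m : ℕ} {Φ Ψ : ℝ → ℝ}

theorem IsRadialProfile.isUnitBallBump (hΦ : IsRadialProfile Φ) :
    IsUnitBallBump fun y : Evec m => Φ (‖y‖ ^ 2) where
  contDiff := hΦ.contDiff.comp (contDiff_norm_sq ℝ)
  eq_zero_of_one_le_norm _ hy := hΦ.eq_zero_of_one_le _ (one_le_pow₀ hy)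

theorem IsRadialProfile.exists_hasDerivAt_neg_half_mul (hΦ : IsRadialProfile Φ) :
    ∃ Ψ, IsRadialProfile Ψ ∧ ∀ s, HasDerivAt Ψ (-(1 / 2) * Φ s) s := by
  have hcont := hΦ.contDiff.continuous
  have hderiv (s : ℝ) :
      HasDerivAt (fun s => -(1 / 2) * ∫ x in (1 : ℝ)..s, Φ x) (-(1 / 2) * Φ s) s :=
    (hcont.integral_hasStrictDerivAt 1 s).hasDerivAt.const_mul _
  refine ⟨_, ⟨?_, fun s hs => ?_⟩, hderiv⟩
  · rw [contDiff_infty_iff_deriv, funext fun s => (hderiv s).deriv]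
    exact ⟨fun s => (hderiv s).differentiableAt, contDiff_const.mul hΦ.contDiff⟩
  · have hzero : Set.EqOn Φ (fun _ => 0) (Set.uIcc 1 s) := fun x hx =>
      hΦ.eq_zero_of_one_le x (by rw [Set.uIcc_of_le hs] at hx; exact hx.1)
    simp [intervalIntegral.integral_congr hzero]

theorem exists_isRadialProfile_integral_eq_one (m : ℕ) :
    ∃ Φ, IsRadialProfile Φ ∧ ∫ y : Evec m, Φ (‖y‖ ^ 2) = 1 := by
  let b : ContDiffBump (0 : ℝ) := ⟨1 / 2, 1, by norm_num, by norm_num⟩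
  have hb : IsRadialProfile b :=
    ⟨b.contDiff, fun s hs => b.zero_of_le_dist (by simpa [b] using hs.trans (le_abs_self s))⟩
  have hpos : 0 < ∫ y : Evec m, b (‖y‖ ^ 2) := by
    refine hb.isUnitBallBump.contDiff.continuous.integral_pos_of_hasCompactSupport_nonneg_nonzero
      hb.isUnitBallBump.hasCompactSupport (fun _ => b.nonneg) (x := 0) ?_
    simp [b.one_of_mem_closedBall (mem_closedBall_self b.rIn_pos.le)]
  refine ⟨fun s => (∫ y : Evec m, b (‖y‖ ^ 2))⁻¹ * b s,
    ⟨contDiff_const.mul hb.contDiff, fun s hs => by simp [hb.eq_zero_of_one_le s hs]⟩, ?_⟩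
  rw [integral_const_mul, inv_mul_cancel₀ hpos.ne']

/-- The average of `g` about `a` against the radial weight with profile `Φ`, dilated by `t`. -/
def radialAverage (g : Evec m → ℝ) (Φ : ℝ → ℝ) (a : Evec m) (t : ℝ) : ℝ :=
  dilationAverage g (fun y => Φ (‖y‖ ^ 2)) a t

variable {g : Evec m → ℝ} {a : Evec m} {r : ℝ}

theorem radialAverage_zero (hΦ : ∫ y : Evec m, Φ (‖y‖ ^ 2) = 1) :
    radialAverage g Φ a 0 = g a := by
  simp [radialAverage, dilationAverage, integral_const_mul, hΦ]

theorem radialAverage_eq_zero (hΦ : IsRadialProfile Φ) (hg : ∀ x ∈ ball a r, g x = 0)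
    (hr : 0 < r) {t : ℝ} (ht : t ∈ Set.Icc 0 r) : radialAverage g Φ a t = 0 := by
  refine integral_eq_zero_of_ae (.of_forall fun y => ?_)
  obtain hy | hy := le_or_gt 1 ‖y‖
  · simp [hΦ.eq_zero_of_one_le _ (one_le_pow₀ hy)]
  · simp [hg _ (add_smul_mem_ball ht hr hy)]

theorem pdv_comp_norm_sq (hΨ : ∀ s, HasDerivAt Ψ (-(1 / 2) * Φ s) s) (i : Fin m) (y : Evec m) :
    pdv i (fun y => Ψ (‖y‖ ^ 2)) y = -(y i * Φ (‖y‖ ^ 2)) := by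
  have hcomp := (hΨ (‖y‖ ^ 2)).comp_hasFDerivAt y (hasStrictFDerivAt_norm_sq y).hasFDerivAt
  rw [pdv, show (fun y => Ψ (‖y‖ ^ 2)) = Ψ ∘ fun y : Evec m => ‖y‖ ^ 2 from rfl,
    DFunLike.congr_fun hcomp.fderiv (EuclideanSpace.single i 1)]
  simp only [smul_apply, coe_innerSL_apply, smul_eq_mul, nsmul_eq_mul, Nat.cast_ofNat,
    EuclideanSpace.inner_single_right, conj_trivial]
  ring

theorem fderiv_apply_eq_sum_pdv (g : Evec m → ℝ) (x y : Evec m) :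
    fderiv ℝ g x y = ∑ i, y i * pdv i g x := by
  conv_lhs => rw [← (EuclideanSpace.basisFun (Fin m) ℝ).sum_repr y]
  simp only [map_sum, map_smul, EuclideanSpace.basisFun_repr, EuclideanSpace.basisFun_apply,
    smul_eq_mul, pdv]

theorem integral_sum_pdv_mul_pdv {ψ : Evec m → ℝ} (hg : ContDiff ℝ ∞ g) (hψ : ContDiff ℝ ∞ ψ)
    (hψs : HasCompactSupport ψ) (a : Evec m) (t : ℝ) :
    ∫ y, ∑ i, pdv i g (a + t • y) * pdv i ψ y = -(t * dilationAverage (lapl g) ψ a t) := by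
  have hg1 (i : Fin m) : ContDiff ℝ ∞ (pdv i g) := contDiff_dirDeriv hg _
  have hg2 (i : Fin m) : ContDiff ℝ ∞ (pdv i (pdv i g)) := contDiff_dirDeriv (hg1 i) _
  have hparts (i : Fin m) : ∫ y, pdv i g (a + t • y) * pdv i ψ y
      = -(t * ∫ y, pdv i (pdv i g) (a + t • y) * ψ y) :=
    dilationAverage_dirDeriv_right ((hg1 i).of_le (by simp)) (hψ.of_le (by simp)) hψs _ a t
  simp only [dilationAverage, lapl, Finset.sum_mul]
  rw [integral_finsetSum, integral_finsetSum, Finset.mul_sum, ← Finset.sum_neg_distrib]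
  · exact Finset.sum_congr rfl fun i _ => hparts i
  · exact fun i _ => (((hg2 i).continuous.comp (by fun_prop)).mul
      hψ.continuous).integrable_of_hasCompactSupport hψs.mul_left
  · exact fun i _ => (((hg1 i).continuous.comp (by fun_prop)).mul
      (contDiff_dirDeriv hψ _).continuous).integrable_of_hasCompactSupport
      (hψs.fderiv_apply ℝ _).mul_left

/- The field `Φ (‖y‖ ^ 2) • y` is the gradient of `-Ψ (‖y‖ ^ 2)`: integrate by parts. -/
theorem hasDerivAt_radialAverage (hg : ContDiff ℝ ∞ g) (hΦ : IsRadialProfile Φ)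
    (hΨ : IsRadialProfile Ψ) (hΨΦ : ∀ s, HasDerivAt Ψ (-(1 / 2) * Φ s) s) (a : Evec m) (t : ℝ) :
    HasDerivAt (radialAverage g Φ a) (t * radialAverage (lapl g) Ψ a t) t := by
  have hgrad (y : Evec m) : fderiv ℝ g (a + t • y) y * Φ (‖y‖ ^ 2)
      = -∑ i, pdv i g (a + t • y) * pdv i (fun y => Ψ (‖y‖ ^ 2)) y := by
    rw [fderiv_apply_eq_sum_pdv, Finset.sum_mul, ← Finset.sum_neg_distrib]
    exact Finset.sum_congr rfl fun i _ => by rw [pdv_comp_norm_sq hΨΦ]; ring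
  have hgreen := integral_sum_pdv_mul_pdv hg hΨ.isUnitBallBump.contDiff
    hΨ.isUnitBallBump.hasCompactSupport a t
  refine (hasDerivAt_dilationAverage (hg.of_le (by simp))
    hΦ.isUnitBallBump.contDiff.continuous hΦ.isUnitBallBump.hasCompactSupport a t).congr_deriv ?_
  simp only [hgrad, integral_neg, hgreen, neg_neg, radialAverage]

theorem exists_polynomial_derivative_eq {N : ℕ} (q : Polynomial ℝ) (hq : q.degree < N) :
    ∃ P : Polynomial ℝ, P.degree < (N + 1 : ℕ) ∧ P.derivative = q := by
  rcases eq_or_ne q 0 with rfl | hq0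
  · exact ⟨0, by simp, by simp⟩
  refine ⟨∑ n ∈ Finset.range N, Polynomial.monomial (n + 1) (q.coeff n / (n + 1)), ?_, ?_⟩
  · refine (Polynomial.degree_sum_le _ _).trans_lt ?_
    rw [Finset.sup_lt_iff (WithBot.bot_lt_coe _)]
    intro n hn
    refine (Polynomial.degree_monomial_le _ _).trans_lt ?_
    exact_mod_cast Nat.succ_lt_succ (Finset.mem_range.1 hn)
  · conv_rhs => rw [q.as_sum_range' N ((Polynomial.natDegree_lt_iff_degree_lt hq0).2 hq)]
    rw [Polynomial.derivative_sum]
    refine Finset.sum_congr rfl fun n _ => ?_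
    rw [Polynomial.derivative_monomial, Nat.add_sub_cancel, Nat.cast_add_one,
      div_mul_cancel₀ _ n.cast_add_one_ne_zero]

theorem exists_polynomial_of_hasDerivAt_sq {N : ℕ} {H : ℝ → ℝ} {q : Polynomial ℝ} {r : ℝ}
    (hq : q.degree < N)
    (hH : ∀ t ∈ Set.Icc 0 r, HasDerivAt H (t * q.eval (t ^ 2)) t) :
    ∃ p : Polynomial ℝ, p.degree < (N + 1 : ℕ) ∧ ∀ t ∈ Set.Icc 0 r, H t = p.eval (t ^ 2) := by
  obtain ⟨P, hP, rfl⟩ := exists_polynomial_derivative_eq q hq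
  have hPsq (t : ℝ) : HasDerivAt (fun t : ℝ => 1 / 2 * P.eval (t ^ 2))
      (t * P.derivative.eval (t ^ 2)) t := by
    refine (((P.hasDerivAt (t ^ 2)).comp t (hasDerivAt_pow 2 t)).const_mul (1 / 2)).congr_deriv ?_
    push_cast
    ring
  have hconst : ∀ t ∈ Set.Icc 0 r,
      H t - 1 / 2 * P.eval (t ^ 2) = H 0 - 1 / 2 * P.eval (0 ^ 2) :=
    constant_of_has_deriv_right_zero
      (fun t ht => ((hH t ht).sub (hPsq t)).continuousAt.continuousWithinAt)
      fun t ht => by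
        have hsub := (hH t ⟨ht.1, ht.2.le⟩).sub (hPsq t)
        rw [sub_self] at hsub
        exact hsub.hasDerivWithinAt
  refine ⟨.C (1 / 2) * P + .C (H 0 - 1 / 2 * P.eval (0 ^ 2)), ?_, fun t ht => ?_⟩
  · refine (Polynomial.degree_add_le _ _).trans_lt (max_lt (by simpa using hP) ?_)
    exact Polynomial.degree_C_le.trans_lt (by exact_mod_cast N.succ_pos)
  · simp only [Polynomial.eval_add, Polynomial.eval_mul, Polynomial.eval_C]
    linarith [hconst t ht]

theorem exists_polynomial_radialAverage_eq (hr : 0 < r) (a : Evec m) (N : ℕ)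
    (hg : ContDiff ℝ ∞ g) (hΦ : IsRadialProfile Φ) (hN : ∀ x ∈ ball a r, lapl^[N] g x = 0) :
    ∃ p : Polynomial ℝ, p.degree < N ∧
      ∀ t ∈ Set.Icc 0 r, radialAverage g Φ a t = p.eval (t ^ 2) := by
  induction N generalizing g Φ with
  | zero => exact ⟨0, by simp, fun t ht =>
    (radialAverage_eq_zero hΦ hN hr ht).trans Polynomial.eval_zero.symm⟩
  | succ N ih =>
    obtain ⟨Ψ, hΨ, hΨΦ⟩ := hΦ.exists_hasDerivAt_neg_half_mul
    obtain ⟨q, hq, hqe⟩ := ih (contDiff_lapl hg) hΨ hN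
    exact exists_polynomial_of_hasDerivAt_sq hq fun t ht =>
      hqe t ht ▸ hasDerivAt_radialAverage hg hΦ hΨ hΨΦ a t

end RadialAverage

section PolyharmonicKernel

/-- A bump `ψ` such that every function `g` with `Δ^N g = 0` on a ball takes at the centre the value
`∫ g (a + r y) ψ(y) dy`. -/
structure IsPolyharmonicKernel {m : ℕ} (N : ℕ) (ψ : Evec m → ℝ) : Prop extends
    IsUnitBallBump ψ where
  dilationAverage_eq : ∀ (g : Evec m → ℝ) (a : Evec m) (r : ℝ), ContDiff ℝ ∞ g → 0 < r →
    (∀ x ∈ ball a r, lapl^[N] g x = 0) → dilationAverage g ψ a r = g a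

/-- The radial weight with profile `Φ`, contracted by `τ` with its integral preserved. -/
def contractedRadialWeight (m : ℕ) (Φ : ℝ → ℝ) (τ : ℝ) (y : Evec m) : ℝ :=
  (τ ^ m)⁻¹ * Φ (‖τ⁻¹ • y‖ ^ 2)

variable {m : ℕ} {Φ : ℝ → ℝ} {τ : ℝ}

theorem IsRadialProfile.isUnitBallBump_contractedRadialWeight (hΦ : IsRadialProfile Φ) (hτ : 0 < τ)
    (hτ1 : τ ≤ 1) : IsUnitBallBump (contractedRadialWeight m Φ τ) where
  contDiff := contDiff_const.mul (hΦ.isUnitBallBump.contDiff.comp (contDiff_const_smul τ⁻¹))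
  eq_zero_of_one_le_norm y hy := by
    have hτy : 1 ≤ ‖τ⁻¹ • y‖ := by
      rw [norm_smul, norm_inv, Real.norm_of_nonneg hτ.le]
      exact one_le_mul_of_one_le_of_one_le ((one_le_inv₀ hτ).2 hτ1) hy
    rw [contractedRadialWeight, hΦ.eq_zero_of_one_le _ (one_le_pow₀ hτy), mul_zero]

theorem dilationAverage_contractedRadialWeight (g : Evec m → ℝ) (Φ : ℝ → ℝ) (hτ : 0 < τ)
    (a : Evec m) (r : ℝ) :
    dilationAverage g (contractedRadialWeight m Φ τ) a r = radialAverage g Φ a (r * τ) := by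
  have hscale := Measure.integral_comp_inv_smul (volume : Measure (Evec m))
    (fun z => g (a + (r * τ) • z) * Φ (‖z‖ ^ 2)) τ
  simp only [smul_smul, mul_assoc, mul_inv_cancel₀ hτ.ne', mul_one, finrank_euclideanSpace,
    Fintype.card_fin, smul_eq_mul, abs_of_pos (pow_pos hτ m)] at hscale
  simp only [dilationAverage, contractedRadialWeight, mul_left_comm (g _), integral_const_mul]
  rw [hscale, inv_mul_cancel_left₀ (pow_pos hτ m).ne']
  rfl

theorem eval_eq_sum_eval_basis_mul_eval {ι K : Type*} [Field K] [DecidableEq ι] {s : Finset ι}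
    {v : ι → K} (hv : Set.InjOn v s) {p : Polynomial K} (hp : p.degree < s.card) (x : K) :
    p.eval x = ∑ j ∈ s, (Lagrange.basis s v j).eval x * p.eval (v j) := by
  conv_lhs => rw [Lagrange.eq_interpolate hv hp]
  simp only [Lagrange.interpolate_apply, Polynomial.eval_finsetSum, Polynomial.eval_mul,
    Polynomial.eval_C, mul_comm]

theorem IsRadialProfile.exists_polynomial_dilationAverage_eq (hΦ : IsRadialProfile Φ)
    (hΦ1 : ∫ y : Evec m, Φ (‖y‖ ^ 2) = 1) {N : ℕ} {g : Evec m → ℝ} {a : Evec m} {r : ℝ}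
    (hg : ContDiff ℝ ∞ g) (hr : 0 < r) (hN : ∀ x ∈ ball a r, lapl^[N] g x = 0) :
    ∃ p : Polynomial ℝ, p.degree < N ∧ p.eval 0 = g a ∧ ∀ τ, 0 < τ → τ ≤ 1 →
      dilationAverage g (contractedRadialWeight m Φ τ) a r = p.eval (τ ^ 2) := by
  obtain ⟨p, hp, hpe⟩ := exists_polynomial_radialAverage_eq hr a N hg hΦ hN
  refine ⟨p.comp (.C (r ^ 2) * .X), ?_, ?_, fun τ hτ hτ1 => ?_⟩
  · rw [Polynomial.degree_lt_iff_coeff_zero] at hp ⊢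
    exact fun n hn => by rw [Polynomial.comp_C_mul_X_coeff, hp n hn, zero_mul]
  · rw [← radialAverage_zero (g := g) (a := a) hΦ1, hpe 0 ⟨le_rfl, hr.le⟩]
    simp
  · rw [dilationAverage_contractedRadialWeight g Φ hτ,
      hpe _ ⟨(mul_pos hr hτ).le, mul_le_of_le_one_right hr.le hτ1⟩]
    simp [mul_pow]

/- The kernel combines `N` contracted radial weights so as to extrapolate the polynomial of radial
averages to radius `0`. -/
theorem exists_isPolyharmonicKernel (m N : ℕ) : ∃ ψ : Evec m → ℝ, IsPolyharmonicKernel N ψ := by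
  obtain ⟨Φ, hΦ, hΦ1⟩ := exists_isRadialProfile_integral_eq_one m
  let t : ℕ → ℝ := fun j => (j + 1 : ℝ)⁻¹
  have ht0 (j : ℕ) : 0 < t j := by positivity
  have ht1 (j : ℕ) : t j ≤ 1 := inv_le_one_of_one_le₀ (by simp)
  have htinj : Function.Injective fun j => t j ^ 2 := fun i j hij => by
    simpa [t] using (pow_left_inj₀ (ht0 i).le (ht0 j).le two_ne_zero).1 hij
  have hbump : ∀ j ∈ Finset.range N, IsUnitBallBump (contractedRadialWeight m Φ (t j)) :=
    fun j _ => hΦ.isUnitBallBump_contractedRadialWeight (ht0 j) (ht1 j)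
  let w : ℕ → ℝ := fun j => (Lagrange.basis (Finset.range N) (fun j => t j ^ 2) j).eval 0
  refine ⟨_, IsUnitBallBump.sum_const_mul hbump w, fun g a r hg hr hN => ?_⟩
  obtain ⟨p, hp, hp0, hpe⟩ := hΦ.exists_polynomial_dilationAverage_eq hΦ1 hg hr hN
  rw [dilationAverage_sum_const_mul hg.continuous hbump, ← hp0,
    eval_eq_sum_eval_basis_mul_eval htinj.injOn (by rwa [Finset.card_range]) 0]
  exact Finset.sum_congr rfl fun j _ => by rw [hpe _ (ht0 j) (ht1 j)]

end PolyharmonicKernel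

section IteratedDirectionalDerivative

variable {F : Type*} [NormedAddCommGroup F] [NormedSpace ℝ F] {f g : F → ℝ}

/-- The iterated derivative of `g` along the directions in `l`, the head of `l` acting last. -/
def iterDirDeriv (l : List F) (g : F → ℝ) : F → ℝ := l.foldr dirDeriv g

theorem contDiff_iterDirDeriv (hg : ContDiff ℝ ∞ g) (l : List F) :
    ContDiff ℝ ∞ (iterDirDeriv l g) := by
  induction l with
  | nil => exact hg
  | cons v l ih => exact contDiff_dirDeriv ih v

theorem hasCompactSupport_iterDirDeriv (hg : HasCompactSupport g) (l : List F) :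
    HasCompactSupport (iterDirDeriv l g) := by
  induction l with
  | nil => exact hg
  | cons v l ih => exact ih.fderiv_apply ℝ v

theorem iterDirDeriv_eventuallyEq {x : F} (hfg : f =ᶠ[𝓝 x] g) (l : List F) :
    iterDirDeriv l f =ᶠ[𝓝 x] iterDirDeriv l g := by
  induction l with
  | nil => exact hfg
  | cons v l ih => exact (ih.fderiv (𝕜 := ℝ)).fun_comp (· v)

theorem dirDeriv_const_mul (v : F) (c : ℝ) (g : F → ℝ) :
    dirDeriv v (fun x => c * g x) = fun x => c * dirDeriv v g x := by
  ext x
  simpa [dirDeriv, Pi.smul_def] using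
    congrArg (· x v) (fderiv_const_smul_field (𝕜 := ℝ) c (f := g))

theorem iterDirDeriv_comp_add_smul (l : List F) (g : F → ℝ) (a : F) (t : ℝ) :
    iterDirDeriv l (fun y => g (a + t • y))
      = fun y => t ^ l.length * iterDirDeriv l g (a + t • y) := by
  induction l with
  | nil => simp [iterDirDeriv]
  | cons v l ih =>
    rw [iterDirDeriv, List.foldr_cons, ← iterDirDeriv, ih, dirDeriv_const_mul,
      dirDeriv_comp_add_smul]
    ext y
    rw [List.length_cons, pow_succ, mul_assoc]
    rfl

theorem contDiffOn_iterDirDeriv {O : Set F} (hO : IsOpen O) (hg : ContDiffOn ℝ ∞ g O)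
    (l : List F) : ContDiffOn ℝ ∞ (iterDirDeriv l g) O := by
  induction l with
  | nil => exact hg
  | cons v l ih => exact (ih.fderiv_of_isOpen hO (m := ∞) (by simp)).clm_apply contDiffOn_const

theorem iterDirDeriv_sum_mul_const {ι : Type*} {s : Finset ι} {O : Set F} (hO : IsOpen O)
    {c : ι → F → ℝ} (hc : ∀ i ∈ s, ContDiffOn ℝ ∞ (c i) O) (w : ι → ℝ) (l : List F) :
    Set.EqOn (iterDirDeriv l fun x => ∑ i ∈ s, c i x * w i)
      (fun x => ∑ i ∈ s, iterDirDeriv l (c i) x * w i) O := by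
  induction l with
  | nil => exact Set.eqOn_refl _ _
  | cons v l ih =>
    intro x hx
    have hd : ∀ i ∈ s, DifferentiableAt ℝ (iterDirDeriv l (c i)) x := fun i hi =>
      ((contDiffOn_iterDirDeriv hO (hc i hi) l).contDiffAt (hO.mem_nhds hx)).differentiableAt
        (by simp)
    change fderiv ℝ (iterDirDeriv l fun x => ∑ i ∈ s, c i x * w i) x v
      = ∑ i ∈ s, fderiv ℝ (iterDirDeriv l (c i)) x v * w i
    rw [(ih.eventuallyEq_of_mem (hO.mem_nhds hx)).fderiv_eq,
      fderiv_fun_sum fun i hi => (hd i hi).mul_const (w i), sum_apply]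
    refine Finset.sum_congr rfl fun i hi => ?_
    rw [fderiv_mul_const (hd i hi), smul_apply, smul_eq_mul, mul_comm]

/-- The constant in the interior estimate for the derivative along `l` of functions reproduced by
averaging against `ψ`. -/
def interiorConst [MeasureSpace F] (ψ : F → ℝ) (l : List F) : ℝ :=
  2 ^ l.length * ∫ y, |iterDirDeriv l (fun y => ψ (-y)) y|

theorem interiorConst_nonneg [MeasureSpace F] (ψ : F → ℝ) (l : List F) : 0 ≤ interiorConst ψ l :=
  mul_nonneg (by positivity) (integral_nonneg fun _ => abs_nonneg _)

end IteratedDirectionalDerivative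

section Convolution

variable {G : Type*} [NormedAddCommGroup G] [NormedSpace ℝ G] [MeasurableSpace G] [BorelSpace G]
  [FiniteDimensional ℝ G] {μ : Measure G} [μ.IsAddHaarMeasure] {f g : G → ℝ}

theorem dirDeriv_convolution (hf : LocallyIntegrable f μ) (hg : ContDiff ℝ 1 g)
    (hgs : HasCompactSupport g) (v : G) :
    dirDeriv v (f ⋆[ContinuousLinearMap.lsmul ℝ ℝ, μ] g)
      = f ⋆[ContinuousLinearMap.lsmul ℝ ℝ, μ] dirDeriv v g := by
  ext x
  have hderiv := hgs.hasFDerivAt_convolution_right (ContinuousLinearMap.lsmul ℝ ℝ) hf hg x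
  rw [dirDeriv, hderiv.fderiv]
  exact convolution_precompR_apply _ hf (hgs.fderiv ℝ) (hg.continuous_fderiv one_ne_zero) x v

theorem iterDirDeriv_convolution (hf : LocallyIntegrable f μ) (hg : ContDiff ℝ ∞ g)
    (hgs : HasCompactSupport g) (l : List G) :
    iterDirDeriv l (f ⋆[ContinuousLinearMap.lsmul ℝ ℝ, μ] g)
      = f ⋆[ContinuousLinearMap.lsmul ℝ ℝ, μ] iterDirDeriv l g := by
  induction l with
  | nil => rfl
  | cons v l ih =>
    exact (congrArg (dirDeriv v) ih).trans (dirDeriv_convolution hf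
      ((contDiff_iterDirDeriv hg l).of_le (by simp)) (hasCompactSupport_iterDirDeriv hgs l) v)

theorem abs_convolution_le {M : ℝ} (hf : ∀ y, |f y| ≤ M) (hg : Integrable g μ) (x : G) :
    |(f ⋆[ContinuousLinearMap.lsmul ℝ ℝ, μ] g) x| ≤ M * ∫ y, |g y| ∂μ := by
  rw [convolution_def, ← integral_sub_left_eq_self _ μ x, ← integral_const_mul, ← Real.norm_eq_abs]
  refine norm_integral_le_of_norm_le (hg.abs.const_mul M) (.of_forall fun y => ?_)
  simp only [ContinuousLinearMap.lsmul_apply, smul_eq_mul, sub_sub_cancel, norm_mul,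
    Real.norm_eq_abs]
  exact mul_le_mul_of_nonneg_right (hf _) (abs_nonneg _)

end Convolution

section InteriorEstimate

variable {E : Type*} [NormedAddCommGroup E] [NormedSpace ℝ E] [MeasureSpace E]
  [BorelSpace E] [(volume : Measure E).IsAddHaarMeasure] {ψ g : E → ℝ} {M : ℝ}

theorem IsUnitBallBump.convolution_indicator_eq_dilationAverage (hψ : IsUnitBallBump ψ) (g : E → ℝ)
    {x : E} (hx : x ∈ ball 0 1) :
    ((ball 0 2).indicator g ⋆ fun y => ψ (-y)) x = dilationAverage g ψ x 1 := by
  rw [convolution_def, ← integral_add_left_eq_self _ x, dilationAverage]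
  refine integral_congr_ae (.of_forall fun y => ?_)
  simp only [ContinuousLinearMap.lsmul_apply, smul_eq_mul, one_smul, sub_add_cancel_left, neg_neg]
  obtain hy | hy := le_or_gt 1 ‖y‖
  · simp [hψ.eq_zero_of_one_le_norm y hy]
  · rw [Set.indicator_of_mem]
    rw [mem_ball_zero_iff] at hx ⊢
    linarith [norm_add_le x y]

variable [FiniteDimensional ℝ E]

theorem locallyIntegrable_indicator_ball {a : E} {r : ℝ} (hg : ContinuousOn g (ball a r))
    (hM : ∀ x ∈ ball a r, |g x| ≤ M) : LocallyIntegrable ((ball a r).indicator g) :=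
  (IntegrableOn.of_bound measure_ball_lt_top (hg.aestronglyMeasurable measurableSet_ball) M
    (ae_restrict_of_forall_mem measurableSet_ball hM)).integrable_indicator
      measurableSet_ball |>.locallyIntegrable

theorem IsUnitBallBump.interior_estimate_of_dilationAverage_eq_ball_two (hψ : IsUnitBallBump ψ)
    (hg : ContinuousOn g (ball 0 2)) (hM : ∀ x ∈ ball 0 2, |g x| ≤ M)
    (hrep : ∀ x ∈ ball 0 1, dilationAverage g ψ x 1 = g x) (l : List E) :
    ContDiffAt ℝ ∞ g 0 ∧
      |iterDirDeriv l g 0| ≤ M * ∫ y, |iterDirDeriv l (fun y => ψ (-y)) y| := by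
  have hK : ContDiff ℝ ∞ fun y => ψ (-y) := hψ.contDiff.comp contDiff_neg
  have hKs : HasCompactSupport fun y => ψ (-y) :=
    hψ.hasCompactSupport.comp_homeomorph (Homeomorph.neg E)
  have hint := locallyIntegrable_indicator_ball hg hM
  have hconv : g =ᶠ[𝓝 0] (ball 0 2).indicator g ⋆ fun y => ψ (-y) := by
    filter_upwards [ball_mem_nhds 0 one_pos] with x hx
    rw [hψ.convolution_indicator_eq_dilationAverage g hx, hrep x hx]
  have hbound (y : E) : |(ball 0 2).indicator g y| ≤ M := by
    by_cases hy : y ∈ ball 0 2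
    · rw [Set.indicator_of_mem hy]
      exact hM y hy
    · rw [Set.indicator_of_notMem hy, abs_zero]
      exact (abs_nonneg _).trans (hM 0 (mem_ball_self two_pos))
  constructor
  · exact (hKs.contDiff_convolution_right _ hint hK).contDiffAt.congr_of_eventuallyEq hconv
  · rw [(iterDirDeriv_eventuallyEq hconv l).eq_of_nhds, iterDirDeriv_convolution hint hK hKs]
    exact abs_convolution_le hbound ((contDiff_iterDirDeriv hK l).continuous
      |>.integrable_of_hasCompactSupport (hasCompactSupport_iterDirDeriv hKs l)) 0

theorem IsUnitBallBump.interior_estimate_of_dilationAverage_eq (hψ : IsUnitBallBump ψ)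
    {a : E} {r : ℝ} (hr : 0 < r) (hg : ContinuousOn g (ball a r)) (hM : ∀ x ∈ ball a r, |g x| ≤ M)
    (hrep : ∀ x ∈ ball a (r / 2), dilationAverage g ψ x (r / 2) = g x) (l : List E) :
    ContDiffAt ℝ ∞ g a ∧ |iterDirDeriv l g a| ≤ interiorConst ψ l * M / r ^ l.length := by
  have hr2 : 0 < r / 2 := half_pos hr
  have hmem (s : ℝ) {y : E} (hy : y ∈ ball 0 s) : a + (r / 2) • y ∈ ball a (r / 2 * s) := by
    rw [mem_ball_iff_norm, add_sub_cancel_left, norm_smul, Real.norm_of_nonneg hr2.le]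
    exact mul_lt_mul_of_pos_left (mem_ball_zero_iff.1 hy) hr2
  have hmem2 : Set.MapsTo (fun y => a + (r / 2) • y) (ball 0 2) (ball a r) := fun y hy => by
    simpa using hmem 2 hy
  have hrep' : ∀ x ∈ ball 0 1, dilationAverage (fun y => g (a + (r / 2) • y)) ψ x 1
      = g (a + (r / 2) • x) := fun x hx => by
    rw [← hrep _ (by simpa using hmem 1 hx)]
    simp only [dilationAverage, one_smul, smul_add, add_assoc]
  obtain ⟨hsmooth, hbound⟩ := hψ.interior_estimate_of_dilationAverage_eq_ball_two
    (g := fun y => g (a + (r / 2) • y)) (hg.comp (by fun_prop) hmem2)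
    (fun y hy => hM _ (hmem2 hy)) hrep' l
  constructor
  · have hrescale : g = (fun y => g (a + (r / 2) • y)) ∘ fun x => (r / 2)⁻¹ • (x - a) := by
      ext x
      simp only [Function.comp_apply, smul_inv_smul₀ hr2.ne', add_sub_cancel]
    rw [hrescale]
    exact ContDiffAt.comp a (by simpa using hsmooth) (by fun_prop)
  · simp only [iterDirDeriv_comp_add_smul, smul_zero, add_zero, abs_mul,
      abs_of_pos (pow_pos hr2 l.length)] at hbound
    rw [div_pow, div_mul_eq_mul_div, div_le_iff₀ (by positivity)] at hbound
    rw [interiorConst, le_div_iff₀ (by positivity)]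
    linarith

end InteriorEstimate

section PointEvaluations

variable {X K : Type*} [Field K] (W : Submodule K (X → K)) {S : Set X}

theorem span_pointEvaluations_eq_top [FiniteDimensional K W]
    (hS : ∀ q ∈ W, (∀ s ∈ S, q s = 0) → q = 0) :
    Submodule.span K ((fun s => (LinearMap.proj s).domRestrict W) '' S) = ⊤ := by
  refine Submodule.span_eq_top_of_ne_zero fun q hq => ?_
  contrapose! hq
  exact Subtype.ext (hS q q.2 fun s hs => hq _ (Set.mem_image_of_mem _ hs))

theorem exists_forall_eq_sum_apply_smul [FiniteDimensional K W]
    (hS : ∀ q ∈ W, (∀ s ∈ S, q s = 0) → q = 0) :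
    ∃ (n : ℕ) (s : Fin n → X) (b : Fin n → X → K), (∀ i, s i ∈ S) ∧ (∀ i, b i ∈ W) ∧
      ∀ q ∈ W, q = ∑ i, q (s i) • b i := by
  have hspan := (span_pointEvaluations_eq_top W hS).ge
  let B := (Module.Basis.ofSpan hspan).reindex (Finite.equivFin _)
  have hB (i) : ∃ s ∈ S, (LinearMap.proj s).domRestrict W = B i := by
    refine Module.Basis.ofSpan_subset hspan ?_
    rw [Module.Basis.reindex_apply]
    exact Set.mem_range_self _
  choose s hs hsB using hB
  refine ⟨_, s, fun i => (Module.evalEquiv K W).symm (B.coord i), hs, fun i => Subtype.prop _,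
    fun q hq => ?_⟩
  have hq' : (⟨q, hq⟩ : W) = ∑ i, B i ⟨q, hq⟩ • (Module.evalEquiv K W).symm (B.coord i) := by
    refine (Module.evalEquiv K W).injective (LinearMap.ext fun φ => ?_)
    rw [Module.evalEquiv_apply, Module.Dual.eval_apply, Module.evalEquiv_apply,
      Module.Dual.eval_apply, map_sum]
    conv_lhs => rw [← B.sum_repr φ, LinearMap.sum_apply]
    refine Finset.sum_congr rfl fun i _ => ?_
    rw [map_smul, Module.apply_evalEquiv_symm_apply, B.coord_apply, LinearMap.smul_apply,
      smul_eq_mul, smul_eq_mul, mul_comm]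
  simpa only [← hsB, Submodule.coe_sum, Submodule.coe_smul, LinearMap.domRestrict_apply,
    LinearMap.proj_apply] using congrArg Subtype.val hq'

end PointEvaluations

section HarmonicPolynomials

variable {m k : ℕ} {f g p : Evec m → ℝ}

theorem contDiff_mvPolynomial_eval (P : MvPolynomial (Fin m) ℝ) :
    ContDiff ℝ ∞ fun x : Evec m => MvPolynomial.eval (fun i => x i) P := by
  simp only [MvPolynomial.eval_eq']
  fun_prop

theorem IsHk.contDiff (hp : IsHk m k p) : ContDiff ℝ ∞ p := by
  obtain ⟨P, hP⟩ := hp.1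
  exact funext hP ▸ contDiff_mvPolynomial_eval P

theorem lapl_add (hf : ContDiff ℝ ∞ f) (hg : ContDiff ℝ ∞ g) :
    lapl (f + g) = lapl f + lapl g := by
  have hadd {f g : Evec m → ℝ} (hf : ContDiff ℝ ∞ f) (hg : ContDiff ℝ ∞ g) (i : Fin m) :
      pdv i (f + g) = pdv i f + pdv i g := by
    ext x
    simp only [pdv, fderiv_add (hf.differentiable (by simp) x) (hg.differentiable (by simp) x),
      add_apply, Pi.add_apply]
  ext x
  simp only [lapl, Pi.add_apply, ← Finset.sum_add_distrib]
  refine Finset.sum_congr rfl fun i _ => ?_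
  rw [hadd hf hg]
  exact congrFun (hadd (contDiff_dirDeriv hf _) (contDiff_dirDeriv hg _) i) x

theorem lapl_smul (c : ℝ) (f : Evec m → ℝ) : lapl (c • f) = c • lapl f := by
  have hsmul (f : Evec m → ℝ) (i : Fin m) : pdv i (c • f) = c • pdv i f := by
    ext x
    simp only [pdv, fderiv_const_smul_field, smul_apply, Pi.smul_apply]
  ext x
  simp only [lapl, hsmul, Pi.smul_apply, Finset.smul_sum]

/-- The space `ℋ_k` of homogeneous harmonic polynomials of degree `k`, as a space of functions. -/
def hkSubmodule (m k : ℕ) : Submodule ℝ (Evec m → ℝ) where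
  carrier := {p | IsHk m k p}
  zero_mem' := by
    refine ⟨⟨0, by simp⟩, by simp, fun x => ?_⟩
    simpa using congrFun (lapl_smul (0 : ℝ) (0 : Evec m → ℝ)) x
  add_mem' {p q} hp hq := by
    obtain ⟨P, hP⟩ := hp.1
    obtain ⟨Q, hQ⟩ := hq.1
    refine ⟨⟨P + Q, fun x => by simp [hP, hQ]⟩, fun c x => ?_, fun x => ?_⟩
    · simp only [Pi.add_apply, hp.2.1, hq.2.1, mul_add]
    · rw [lapl_add hp.contDiff hq.contDiff, Pi.add_apply, hp.2.2, hq.2.2, add_zero]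
  smul_mem' a p hp := by
    obtain ⟨P, hP⟩ := hp.1
    refine ⟨⟨MvPolynomial.C a * P, fun x => by simp [hP]⟩, fun c x => ?_, fun x => ?_⟩
    · simp only [Pi.smul_apply, hp.2.1, smul_eq_mul, mul_left_comm]
    · rw [lapl_smul, Pi.smul_apply, hp.2.2, smul_zero]

/-- Polynomials as functions on Euclidean space. -/
def evecEval (m : ℕ) : MvPolynomial (Fin m) ℝ →ₗ[ℝ] (Evec m → ℝ) where
  toFun P x := MvPolynomial.eval (fun i => x i) P
  map_add' P Q := by ext x; simp
  map_smul' c P := by ext x; simp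

theorem eval_smul_of_isHomogeneous {σ R : Type*} [CommSemiring R] {P : MvPolynomial σ R}
    (hP : P.IsHomogeneous k) (c : R) (x : σ → R) :
    MvPolynomial.eval (c • x) P = c ^ k * MvPolynomial.eval x P := by
  rw [MvPolynomial.eval_eq, MvPolynomial.eval_eq, Finset.mul_sum]
  refine Finset.sum_congr rfl fun d hd => ?_
  have hdeg : ∑ i ∈ d.support, d i = k := by
    simpa [Finsupp.weight_apply, Finsupp.sum] using hP (MvPolynomial.mem_support_iff.1 hd)
  simp only [Pi.smul_apply, smul_eq_mul, mul_pow, Finset.prod_mul_distrib,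
    Finset.prod_pow_eq_pow_sum, hdeg, mul_left_comm]

theorem eval_homogeneousComponent_eq {σ K : Type*} [Field K] [Infinite K] {P : MvPolynomial σ K}
    {x : σ → K} (hP : ∀ c : K, MvPolynomial.eval (c • x) P = c ^ k * MvPolynomial.eval x P) :
    MvPolynomial.eval x (P.homogeneousComponent k) = MvPolynomial.eval x P := by
  have hpoly : ∑ n ∈ Finset.range (P.totalDegree + 1), Polynomial.monomial n
      (MvPolynomial.eval x (P.homogeneousComponent n)) =
        Polynomial.monomial k (MvPolynomial.eval x P) := by
    refine Polynomial.funext fun c => ?_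
    rw [Polynomial.eval_monomial, mul_comm, ← hP]
    conv_rhs => rw [← MvPolynomial.sum_homogeneousComponent P]
    simp only [Polynomial.eval_finsetSum, Polynomial.eval_monomial, map_sum, mul_comm _ (c ^ _),
      eval_smul_of_isHomogeneous (MvPolynomial.homogeneousComponent_isHomogeneous _ P)]
  have hcoeff := congrArg (Polynomial.coeff · k) hpoly
  simp only [Polynomial.finsetSum_coeff, Polynomial.coeff_monomial, if_true,
    Finset.sum_ite_eq', Finset.mem_range] at hcoeff
  rw [← hcoeff, eq_comm, ite_eq_left_iff]
  intro hk
  rw [MvPolynomial.homogeneousComponent_eq_zero _ _ (by omega), map_zero]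

theorem hkSubmodule_le_map (m k : ℕ) :
    hkSubmodule m k ≤ (MvPolynomial.homogeneousSubmodule (Fin m) ℝ k).map (evecEval m) := by
  intro p hp
  obtain ⟨P, hP⟩ := hp.1
  refine ⟨_, MvPolynomial.homogeneousComponent_isHomogeneous k P, funext fun x => ?_⟩
  rw [hP x]
  exact eval_homogeneousComponent_eq fun c => by
    rw [← hP x, ← hp.2.1 c x, hP]
    rfl

instance (m k : ℕ) : FiniteDimensional ℝ (hkSubmodule m k) :=
  have : Module.Finite ℝ ((MvPolynomial.homogeneousSubmodule (Fin m) ℝ k).map (evecEval m)) :=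
    Module.Finite.iff_fg.2 ((MvPolynomial.homogeneousSubmodule_fg _ _ k).map _)
  Submodule.finiteDimensional_of_le (hkSubmodule_le_map m k)

theorem IsHk.eq_zero_of_forall_mem_ball (hp : IsHk m k p) (hp0 : ∀ u ∈ ball 0 1, p u = 0) :
    p = 0 := by
  ext u
  have hpos : 0 < 1 + ‖u‖ := by positivity
  have hmem : (1 + ‖u‖)⁻¹ • u ∈ ball (0 : Evec m) 1 := by
    rw [mem_ball_zero_iff, norm_smul, norm_inv, Real.norm_of_nonneg hpos.le,
      inv_mul_lt_iff₀ hpos]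
    linarith
  have hscaled := hp0 _ hmem
  rw [hp.2.1] at hscaled
  exact (mul_eq_zero.1 hscaled).resolve_left (pow_ne_zero _ (inv_ne_zero hpos.ne'))

/-- Interpolation in `ℋ_k`: every element of `ℋ_k` is recovered from its values at the nodes `s i`,
which lie in the unit ball, as a combination of the polynomials `b i`. -/
structure IsHkInterpolation (m k : ℕ) {n : ℕ} (s : Fin n → Evec m) (b : Fin n → Evec m → ℝ) :
    Prop where
  mem_ball : ∀ i, s i ∈ ball 0 1
  isHk : ∀ i, IsHk m k (b i)
  eq_sum : ∀ q, IsHk m k q → q = ∑ i, q (s i) • b i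

theorem exists_isHkInterpolation (m k : ℕ) :
    ∃ (n : ℕ) (s : Fin n → Evec m) (b : Fin n → Evec m → ℝ), IsHkInterpolation m k s b := by
  obtain ⟨n, s, b, hs, hb, hsum⟩ := exists_forall_eq_sum_apply_smul (hkSubmodule m k)
    fun _ hq => IsHk.eq_zero_of_forall_mem_ball hq
  exact ⟨n, s, b, hs, hb, hsum⟩

end HarmonicPolynomials

section Elimination

open scoped Matrix

variable {ι R : Type*} [Fintype ι] [Ring R] {X Y U : ι → R}

theorem commute_dotProduct_self_dotProduct {v w : ι → R} (hv : ∀ i j, Commute (X i) (v j))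
    (hw : ∀ i j, Commute (X i) (w j)) : Commute (X ⬝ᵥ X) (v ⬝ᵥ w) :=
  .sum_left _ _ _ fun i _ => .sum_right _ _ _ fun j _ =>
    ((hv i j).mul_right (hw i j)).mul_left ((hv i j).mul_right (hw i j))

theorem dotProduct_mem_invtSubmodule {S V : Type*} [Semiring S] [AddCommMonoid V] [Module S V]
    {I : Submodule S V} {v w : ι → Module.End S V} (hv : ∀ i, I ∈ (v i).invtSubmodule)
    (hw : ∀ i, I ∈ (w i).invtSubmodule) : I ∈ Module.End.invtSubmodule (v ⬝ᵥ w) := by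
  simp only [Module.End.mem_invtSubmodule_iff_forall_mem_of_mem] at hv hw ⊢
  intro f hf
  rw [dotProduct, LinearMap.sum_apply]
  exact I.sum_mem fun i _ => hv i _ (hw i f hf)

variable {𝕜 V : Type*} [Field 𝕜] [AddCommGroup V] [Module 𝕜 V]

/-- The bosonic Laplacian `Δ_x - (4 / K) ⟨u, ∂_x⟩ ⟨∂_u, ∂_x⟩ + (4 / (K (K - 2))) |u|² ⟨∂_u, ∂_x⟩²`
with denominators cleared; `K = m + 2k - 2` gives `𝒟_k`. -/
def bosonicPencil [Algebra 𝕜 R] (X Y U : ι → R) (K : 𝕜) : R :=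
  (K * (K - 2)) • (X ⬝ᵥ X) - (4 * (K - 2)) • ((U ⬝ᵥ X) * (Y ⬝ᵥ X)) +
    (4 : 𝕜) • ((U ⬝ᵥ U) * (Y ⬝ᵥ X) ^ 2)

theorem bosonicPencil_apply (X Y U : ι → Module.End 𝕜 V) (K : 𝕜) (f : V) :
    bosonicPencil X Y U K f = (K * (K - 2)) • (X ⬝ᵥ X) f -
      (4 * (K - 2)) • (U ⬝ᵥ X) ((Y ⬝ᵥ X) f) + (4 : 𝕜) • (U ⬝ᵥ U) ((Y ⬝ᵥ X) ((Y ⬝ᵥ X) f)) := by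
  simp only [bosonicPencil, pow_two, LinearMap.add_apply, LinearMap.sub_apply,
    LinearMap.smul_apply, Module.End.mul_apply]

variable [DecidableEq ι]

/-- `X i`, `Y i`, `U i` satisfy the commutation relations of `∂_{x_i}`, `∂_{u_i}` and multiplication
by `u_i`. Then `X ⬝ᵥ X`, `U ⬝ᵥ X`, `Y ⬝ᵥ X`, `U ⬝ᵥ U` stand for `Δ_x`, `⟨u, ∂_x⟩`, `⟨∂_u, ∂_x⟩`
and `|u|²`. -/
structure IsWeylTriple (X Y U : ι → R) : Prop where
  commute_X_X : ∀ i j, Commute (X i) (X j)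
  commute_X_Y : ∀ i j, Commute (X i) (Y j)
  commute_X_U : ∀ i j, Commute (X i) (U j)
  Y_mul_U : ∀ i j, Y i * U j = U j * Y i + if i = j then 1 else 0

theorem IsWeylTriple.mul_dotProduct_U_X (h : IsWeylTriple X Y U) :
    (Y ⬝ᵥ X) * (U ⬝ᵥ X) = (U ⬝ᵥ X) * (Y ⬝ᵥ X) + X ⬝ᵥ X := by
  have hterm (i j : ι) : Y i * X i * (U j * X j)
      = U j * X j * (Y i * X i) + if i = j then X i * X j else 0 := by
    calc Y i * X i * (U j * X j) = Y i * (X i * U j) * X j := by noncomm_ring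
      _ = Y i * U j * (X i * X j) := by rw [(h.commute_X_U i j).eq]; noncomm_ring
      _ = U j * (Y i * X j) * X i + if i = j then X i * X j else 0 := by
        rw [h.Y_mul_U, (h.commute_X_X i j).eq]
        split_ifs <;> noncomm_ring
      _ = U j * X j * (Y i * X i) + if i = j then X i * X j else 0 := by
        rw [← (h.commute_X_Y j i).eq]
        noncomm_ring
  simp only [dotProduct, Finset.sum_mul_sum, hterm, Finset.sum_add_distrib, Finset.sum_ite_eq,
    Finset.mem_univ, if_true]
  rw [Finset.sum_comm]

theorem IsWeylTriple.mul_dotProduct_U_U (h : IsWeylTriple X Y U) :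
    (Y ⬝ᵥ X) * (U ⬝ᵥ U) = (U ⬝ᵥ U) * (Y ⬝ᵥ X) + 2 • (U ⬝ᵥ X) := by
  have hYUU (i j : ι) : Y i * (U j * U j) = U j * U j * Y i + if i = j then 2 • U j else 0 := by
    rw [← mul_assoc, h.Y_mul_U, add_mul, mul_assoc, h.Y_mul_U]
    split_ifs <;> noncomm_ring
  have hterm (i j : ι) : Y i * X i * (U j * U j)
      = U j * U j * (Y i * X i) + if i = j then 2 • (U j * X i) else 0 := by
    rw [mul_assoc, ((h.commute_X_U i j).mul_right (h.commute_X_U i j)).eq, ← mul_assoc, hYUU]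
    split_ifs <;> noncomm_ring
  simp only [dotProduct, Finset.sum_mul_sum, hterm, Finset.sum_add_distrib, Finset.sum_ite_eq,
    Finset.mem_univ, if_true, Finset.smul_sum]
  rw [Finset.sum_comm]

theorem IsWeylTriple.mul_bosonicPencil [Algebra 𝕜 R] (h : IsWeylTriple X Y U) (K : 𝕜) :
    (Y ⬝ᵥ X) * bosonicPencil X Y U K = bosonicPencil X Y U (K - 2) * (Y ⬝ᵥ X) := by
  have hT := (commute_dotProduct_self_dotProduct h.commute_X_Y h.commute_X_X).eq.symm
  simp only [bosonicPencil, mul_add, mul_sub, add_mul, sub_mul, mul_smul_comm, smul_mul_assoc,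
    pow_two, ← mul_assoc, hT, h.mul_dotProduct_U_X, h.mul_dotProduct_U_U]
  module

theorem IsWeylTriple.dotProduct_X_X_pow_apply_mem {X Y U : ι → Module.End 𝕜 V}
    (h : IsWeylTriple X Y U) {I : Submodule 𝕜 V}
    (hX : ∀ i, I ∈ (X i).invtSubmodule) (hY : ∀ i, I ∈ (Y i).invtSubmodule)
    (hU : ∀ i, I ∈ (U i).invtSubmodule) {n : ℕ} {K : 𝕜} (hK : ∀ j ≤ n, K ≠ 2 * j) {f : V}
    (hB : ((Y ⬝ᵥ X) ^ n) f ∈ I) (hL : bosonicPencil X Y U K f ∈ I) :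
    ((X ⬝ᵥ X) ^ n) f ∈ I := by
  induction n generalizing K f with
  | zero => exact hB
  | succ n ih =>
    have hlow : ((X ⬝ᵥ X) ^ n) ((Y ⬝ᵥ X) f) ∈ I := by
      refine ih (K := K - 2) (fun j hj hKj => hK (j + 1) (by omega) ?_) ?_ ?_
      · push_cast
        linear_combination hKj
      · rwa [pow_succ] at hB
      · rw [← Module.End.mul_apply, ← h.mul_bosonicPencil]
        exact dotProduct_mem_invtSubmodule hY hX hL
    have hcomm {D : Module.End 𝕜 V} (hD : Commute (X ⬝ᵥ X) D) (g : V) :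
        ((X ⬝ᵥ X) ^ n) (D g) = D (((X ⬝ᵥ X) ^ n) g) := LinearMap.congr_fun (hD.pow_left n).eq g
    have hUX := hcomm (commute_dotProduct_self_dotProduct h.commute_X_U h.commute_X_X)
    have hYX := hcomm (commute_dotProduct_self_dotProduct h.commute_X_Y h.commute_X_X)
    have hUU := hcomm (commute_dotProduct_self_dotProduct h.commute_X_U h.commute_X_U)
    have hTL := Submodule.le_comap_pow_of_le_comap I (dotProduct_mem_invtSubmodule hX hX) n hL
    rw [Submodule.mem_comap, bosonicPencil_apply, map_add, map_sub, map_smul, map_smul, map_smul,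
      hUX, hUU, hYX ((Y ⬝ᵥ X) f),
      Submodule.add_mem_iff_left _ (I.smul_mem _ (dotProduct_mem_invtSubmodule hU hU
        (dotProduct_mem_invtSubmodule hY hX hlow))),
      Submodule.sub_mem_iff_left _ (I.smul_mem _ (dotProduct_mem_invtSubmodule hU hX hlow)),
      ← Module.End.mul_apply, ← pow_succ] at hTL
    have hK0 : K ≠ 0 := by simpa using hK 0 (by omega)
    have hK2 : K - 2 ≠ 0 := sub_ne_zero.2 (by simpa using hK 1 (by omega))
    exact (I.smul_mem_iff (mul_ne_zero hK0 hK2)).1 hTL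

end Elimination

section SmoothFunctions

variable {F : Type*} [NormedAddCommGroup F] [NormedSpace ℝ F]

/-- The space of smooth real-valued functions on `F`. -/
def smoothFun (F : Type*) [NormedAddCommGroup F] [NormedSpace ℝ F] : Submodule ℝ (F → ℝ) where
  carrier := {g | ContDiff ℝ ∞ g}
  add_mem' hf hg := (show ContDiff ℝ ∞ _ from hf).add hg
  zero_mem' := show ContDiff ℝ ∞ _ from contDiff_const
  smul_mem' c _ hg := (show ContDiff ℝ ∞ _ from hg).const_smul c

theorem contDiff_smoothFun (g : smoothFun F) : ContDiff ℝ ∞ (g : F → ℝ) := g.2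

theorem differentiable_smoothFun (g : smoothFun F) : Differentiable ℝ (g : F → ℝ) :=
  (contDiff_smoothFun g).differentiable (by simp)

/-- `dirDeriv v` as an endomorphism of the space of smooth functions. -/
def dirDerivEnd (v : F) : Module.End ℝ (smoothFun F) where
  toFun g := ⟨dirDeriv v g, contDiff_dirDeriv (contDiff_smoothFun g) v⟩
  map_add' f g := Subtype.ext <| funext fun x =>
    congrArg (· v) (fderiv_add (differentiable_smoothFun f x) (differentiable_smoothFun g x))
  map_smul' c f := Subtype.ext <| funext fun x =>
    congrArg (· v) (fderiv_const_smul (differentiable_smoothFun f x) c)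

/-- Multiplication by the linear form `ℓ` as an endomorphism of the space of smooth functions. -/
def mulEnd (ℓ : F →L[ℝ] ℝ) : Module.End ℝ (smoothFun F) where
  toFun g := ⟨fun x => ℓ x * (g : F → ℝ) x, ℓ.contDiff.mul (contDiff_smoothFun g)⟩
  map_add' _ _ := Subtype.ext (funext fun _ => mul_add _ _ _)
  map_smul' _ _ := Subtype.ext (funext fun _ => mul_left_comm _ _ _)

theorem commute_dirDerivEnd (v w : F) : Commute (dirDerivEnd v) (dirDerivEnd w) := by
  ext g x
  have hd : DifferentiableAt ℝ (fderiv ℝ (g : F → ℝ)) x :=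
    ((contDiff_smoothFun g).fderiv_right (m := ∞) (by simp)).differentiable (by simp) x
  have hsecond (v w : F) : dirDeriv v (dirDeriv w g) x = fderiv ℝ (fderiv ℝ (g : F → ℝ)) x v w :=
    (congrArg (· v) (hd.hasFDerivAt.clm_apply (hasFDerivAt_const w x)).fderiv).trans (by simp)
  have hsymm : IsSymmSndFDerivAt ℝ (g : F → ℝ) x :=
    (contDiff_smoothFun g).contDiffAt.isSymmSndFDerivAt (by simpa using ENat.LEInfty.out)
  exact (hsecond v w).trans ((hsymm.eq v w).trans (hsecond w v).symm)

theorem dirDerivEnd_mul_mulEnd (v : F) (ℓ : F →L[ℝ] ℝ) :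
    dirDerivEnd v * mulEnd ℓ = mulEnd ℓ * dirDerivEnd v + ℓ v • 1 := by
  ext g x
  have hprod := (ℓ.hasFDerivAt.mul (differentiable_smoothFun g x).hasFDerivAt).fderiv
  exact (congrArg (· v) hprod).trans (congrArg (ℓ x * _ + ·) (mul_comm _ _))

/-- The smooth functions that vanish on `S`. -/
def vanishingOn (S : Set F) : Submodule ℝ (smoothFun F) where
  carrier := {g | Set.EqOn g 0 S}
  add_mem' hf hg _ hx := (congrArg₂ (· + ·) (hf hx) (hg hx)).trans (add_zero 0)
  zero_mem' _ _ := rfl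
  smul_mem' c _ hg _ hx := (congrArg (c * ·) (hg hx)).trans (mul_zero c)

theorem vanishingOn_mem_invtSubmodule_dirDerivEnd {S : Set F} (hS : IsOpen S) (v : F) :
    vanishingOn S ∈ (dirDerivEnd v).invtSubmodule := fun g hg x hx => by
  have hzero : (g : F → ℝ) =ᶠ[𝓝 x] fun _ => 0 := eventually_of_mem (hS.mem_nhds hx) hg
  have hfderiv : fderiv ℝ (g : F → ℝ) x = 0 := hzero.fderiv_eq.trans (by simp)
  exact congrArg (· v) hfderiv

theorem vanishingOn_mem_invtSubmodule_mulEnd (S : Set F) (ℓ : F →L[ℝ] ℝ) :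
    vanishingOn S ∈ (mulEnd ℓ).invtSubmodule :=
  fun _ hg x hx => (congrArg (ℓ x * ·) (hg hx)).trans (mul_zero _)

theorem mul_dirDeriv_apply_of_comp_eq {S : F →L[ℝ] F} {g : F → ℝ} (hg : Differentiable ℝ g)
    {a b : ℝ} (h : ∀ q, g (S q) = a * g q) {v : F} (hv : S v = b • v) (q : F) :
    b * dirDeriv v g (S q) = a * dirDeriv v g q := by
  have hcomp : HasFDerivAt (fun q => g (S q)) ((fderiv ℝ g (S q)).comp S) q :=
    (hg (S q)).hasFDerivAt.comp q S.hasFDerivAt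
  have hmul : HasFDerivAt (fun q => g (S q)) (a • fderiv ℝ g q) q :=
    funext h ▸ (hg q).hasFDerivAt.const_mul a
  simpa [hv, dirDeriv] using congrArg (· v) (hcomp.unique hmul)

end SmoothFunctions

section HomogeneousSnd

/-- `g` is homogeneous of degree `d` in its second variable. The degree is an integer, so that
differentiating in the second variable always lowers it by one. -/
def IsHomogeneousSnd {E F : Type*} [SMul ℝ F] (d : ℤ) (g : E × F → ℝ) : Prop :=
  ∀ c : ℝ, c ≠ 0 → ∀ q, g (q.1, c • q.2) = c ^ d * g q

theorem IsHomogeneousSnd.eq_zero {E F : Type*} [TopologicalSpace E] [TopologicalSpace F]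
    [SMul ℝ F] [ContinuousSMul ℝ F] {d : ℤ} {g : E × F → ℝ} (h : IsHomogeneousSnd d g)
    (hg : Continuous g) (hd : d < 0) : g = 0 := by
  obtain ⟨n, rfl⟩ := Int.exists_eq_neg_ofNat hd.le
  have hn : n ≠ 0 := by omega
  ext q
  -- `c ^ n * g (x, c u) = g (x, u)`, and the left-hand side tends to `0` as `c → 0`.
  have hlim : Tendsto (fun c : ℝ => c ^ n * g (q.1, c • q.2)) (𝓝[≠] 0) (𝓝 0) := by
    have hcont : Continuous fun c : ℝ => c ^ n * g (q.1, c • q.2) := by fun_prop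
    simpa [hn] using (hcont.tendsto 0).mono_left nhdsWithin_le_nhds
  refine tendsto_nhds_unique (tendsto_const_nhds.congr' ?_) hlim
  filter_upwards [self_mem_nhdsWithin] with c hc
  rw [h c hc, zpow_neg, zpow_natCast, mul_inv_cancel_left₀ (pow_ne_zero n hc)]

variable {E F : Type*} [NormedAddCommGroup E] [NormedSpace ℝ E] [NormedAddCommGroup F]
  [NormedSpace ℝ F]

theorem IsHomogeneousSnd.dirDeriv_fst {d : ℤ} {g : E × F → ℝ} (h : IsHomogeneousSnd d g)
    (hg : Differentiable ℝ g) (v : E) : IsHomogeneousSnd d (dirDeriv (v, 0) g) := fun c hc q => by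
  have := mul_dirDeriv_apply_of_comp_eq (v := (v, 0)) (b := 1)
    (S := (ContinuousLinearMap.fst ℝ E F).prod (c • ContinuousLinearMap.snd ℝ E F))
    hg (h c hc) (by simp) q
  rwa [one_mul] at this

theorem IsHomogeneousSnd.dirDeriv_snd {d : ℤ} {g : E × F → ℝ} (h : IsHomogeneousSnd d g)
    (hg : Differentiable ℝ g) (v : F) :
    IsHomogeneousSnd (d - 1) (dirDeriv (0, v) g) := fun c hc q => by
  have := mul_dirDeriv_apply_of_comp_eq (v := (0, v)) (b := c)
    (S := (ContinuousLinearMap.fst ℝ E F).prod (c • ContinuousLinearMap.snd ℝ E F))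
    hg (h c hc) (by simp) q
  rw [zpow_sub_one₀ hc, mul_right_comm, ← div_eq_mul_inv]
  exact (eq_div_iff hc).2 ((mul_comm _ _).trans this)

end HomogeneousSnd

section BosonicOperators

open scoped Matrix

variable {m : ℕ}

/-- The operator `∂_{x_i}` on smooth functions of `(x, u)`. -/
def partialX (i : Fin m) : Module.End ℝ (smoothFun (Evec m × Evec m)) :=
  dirDerivEnd (EuclideanSpace.single i 1, 0)

/-- The operator `∂_{u_i}` on smooth functions of `(x, u)`. -/
def partialU (i : Fin m) : Module.End ℝ (smoothFun (Evec m × Evec m)) :=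
  dirDerivEnd (0, EuclideanSpace.single i 1)

/-- Multiplication by `u_i` on smooth functions of `(x, u)`. -/
def mulU (i : Fin m) : Module.End ℝ (smoothFun (Evec m × Evec m)) :=
  mulEnd ((EuclideanSpace.proj i : Evec m →L[ℝ] ℝ).comp (ContinuousLinearMap.snd ℝ _ _))

theorem isWeylTriple_partialX_partialU_mulU :
    IsWeylTriple (partialX (m := m)) partialU mulU where
  commute_X_X _ _ := commute_dirDerivEnd _ _
  commute_X_Y _ _ := commute_dirDerivEnd _ _
  commute_X_U _ _ := (dirDerivEnd_mul_mulEnd _ _).trans (by simp [partialX, mulU])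
  Y_mul_U i j := (dirDerivEnd_mul_mulEnd _ _).trans <| by
    rcases eq_or_ne i j with rfl | hij <;> simp [partialU, mulU, *]

theorem pd1_curry (i : Fin m) (g : smoothFun (Evec m × Evec m)) :
    pd1 i (Function.curry g) = Function.curry (partialX i g) := by
  ext x u
  have hslice := (differentiable_smoothFun g (x, u)).hasFDerivAt.comp x
    ((hasFDerivAt_id (𝕜 := ℝ) x).prodMk (hasFDerivAt_const u x))
  exact congrArg (· (EuclideanSpace.single i 1)) hslice.fderiv

theorem pd2_curry (i : Fin m) (g : smoothFun (Evec m × Evec m)) :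
    pd2 i (Function.curry g) = Function.curry (partialU i g) := by
  ext x u
  have hslice := (differentiable_smoothFun g (x, u)).hasFDerivAt.comp u
    ((hasFDerivAt_const x u).prodMk (hasFDerivAt_id (𝕜 := ℝ) u))
  exact congrArg (· (EuclideanSpace.single i 1)) hslice.fderiv

theorem dotProduct_apply_apply {F : Type*} [NormedAddCommGroup F] [NormedSpace ℝ F]
    (v w : Fin m → Module.End ℝ (smoothFun F)) (g : smoothFun F) (q : F) :
    ((v ⬝ᵥ w) g : F → ℝ) q = ∑ i, (v i (w i g) : F → ℝ) q := by
  simp [dotProduct, LinearMap.sum_apply]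

theorem lapl_slice (g : smoothFun (Evec m × Evec m)) (u : Evec m) :
    lapl (fun x => g.1 (x, u)) = fun x => ((partialX ⬝ᵥ partialX) g).1 (x, u) := by
  ext x
  have hterm (i : Fin m) : pdv i (pdv i fun x => g.1 (x, u)) x =
      (partialX i (partialX i g)).1 (x, u) :=
    (congrFun₂ (congrArg (pd1 i) (pd1_curry i g)) x u).trans
      (congrFun₂ (pd1_curry i (partialX i g)) x u)
  simp only [lapl, hterm]
  exact (dotProduct_apply_apply partialX partialX g (x, u)).symm

theorem lapl_iterate_slice (g : smoothFun (Evec m × Evec m)) (n : ℕ) (u : Evec m) :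
    lapl^[n] (fun x => g.1 (x, u)) = fun x => (((partialX ⬝ᵥ partialX) ^ n) g).1 (x, u) := by
  induction n with
  | zero => rfl
  | succ n ih =>
    rw [Function.iterate_succ_apply', ih, lapl_slice, pow_succ', Module.End.mul_apply]

theorem mulU_dotProduct_mulU_apply (g : smoothFun (Evec m × Evec m)) (x u : Evec m) :
    ((mulU ⬝ᵥ mulU) g).1 (x, u) = ‖u‖ ^ 2 * g.1 (x, u) := by
  rw [dotProduct_apply_apply, EuclideanSpace.real_norm_sq_eq, Finset.sum_mul]
  exact Finset.sum_congr rfl fun i _ => by rw [pow_two, mul_assoc]; rfl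

theorem mul_Dk_curry {k : ℕ} {K : ℝ} (hK : K = m + 2 * k - 2) (hK0 : K ≠ 0) (hK2 : K ≠ 2)
    (g : smoothFun (Evec m × Evec m)) (x u : Evec m) :
    K * (K - 2) * Dk m k (Function.curry g) x u =
      (bosonicPencil partialX partialU mulU K g).1 (x, u) := by
  have hUX : ((mulU ⬝ᵥ partialX) ((partialU ⬝ᵥ partialX) g)).1 (x, u) =
      ∑ i, ∑ j, u i * (partialX i (partialU j (partialX j g))).1 (x, u) := by
    rw [dotProduct_apply_apply]
    refine Finset.sum_congr rfl fun i _ => ?_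
    rw [dotProduct, LinearMap.sum_apply, map_sum, map_sum, Submodule.coe_sum, Finset.sum_apply]
    rfl
  have hYX : ((partialU ⬝ᵥ partialX) ((partialU ⬝ᵥ partialX) g)).1 (x, u) =
      ∑ i, ∑ j, (partialU i (partialX i (partialU j (partialX j g)))).1 (x, u) := by
    rw [dotProduct_apply_apply]
    refine Finset.sum_congr rfl fun i _ => ?_
    rw [dotProduct, LinearMap.sum_apply, map_sum, map_sum, Submodule.coe_sum, Finset.sum_apply]
    rfl
  simp only [Dk, pd1_curry, pd2_curry, Function.curry_apply]
  rw [← hUX, ← hYX, ← dotProduct_apply_apply, bosonicPencil_apply]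
  have hK4 : (m : ℝ) + 2 * k - 4 = K - 2 := by rw [hK]; ring
  have hK2' := sub_ne_zero.2 hK2
  rw [hK4, ← hK]
  change _ = K * (K - 2) * _ - 4 * (K - 2) * _ + 4 * ((mulU ⬝ᵥ mulU) _).1 (x, u)
  rw [mulU_dotProduct_mulU_apply]
  field_simp

theorem IsHomogeneousSnd.partialU_dotProduct_partialX_pow {d : ℤ}
    {g : smoothFun (Evec m × Evec m)} (h : IsHomogeneousSnd d (g : Evec m × Evec m → ℝ)) (n : ℕ) :
    IsHomogeneousSnd (d - n)
      (((partialU ⬝ᵥ partialX) ^ n) g : smoothFun (Evec m × Evec m)).1 := by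
  induction n with
  | zero => simpa using h
  | succ n ih =>
    intro c hc q
    rw [pow_succ', Module.End.mul_apply, dotProduct_apply_apply, dotProduct_apply_apply,
      Finset.mul_sum]
    refine Finset.sum_congr rfl fun i _ => ?_
    rw [Nat.cast_succ, ← sub_sub]
    exact (ih.dirDeriv_fst (differentiable_smoothFun _) _).dirDeriv_snd
      (differentiable_smoothFun (partialX i _)) _ c hc q

theorem lapl_iterate_eq_zero_of_Dk_eq_zero {k : ℕ} (hm : ∀ j ≤ k + 1, (m : ℝ) + 2 * k - 2 ≠ 2 * j)
    {f : Evec m → Evec m → ℝ} (hf : ContDiff ℝ ∞ (Function.uncurry f))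
    (hhom : IsHomogeneousSnd k (Function.uncurry f)) {O O' : Set (Evec m)} (hO : IsOpen O)
    (hO' : IsOpen O') (hD : ∀ x ∈ O, ∀ u ∈ O', Dk m k f x u = 0) {x u : Evec m} (hx : x ∈ O)
    (hu : u ∈ O') : lapl^[k + 1] (fun x => f x u) x = 0 := by
  let g : smoothFun (Evec m × Evec m) := ⟨Function.uncurry f, hf⟩
  have hB : ((partialU ⬝ᵥ partialX) ^ (k + 1)) g = 0 :=
    Subtype.ext <| (hhom.partialU_dotProduct_partialX_pow (g := g) (k + 1)).eq_zero
      (contDiff_smoothFun _).continuous (by push_cast; linarith)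
  have hopen : IsOpen (O ×ˢ O') := hO.prod hO'
  have hL : bosonicPencil partialX partialU mulU ((m : ℝ) + 2 * k - 2) g ∈
      vanishingOn (O ×ˢ O') := fun q hq => by
    rw [← mul_Dk_curry rfl (by simpa using hm 0 (by omega)) (by simpa using hm 1 (by omega))]
    exact (congrArg _ (hD q.1 hq.1 q.2 hq.2)).trans (mul_zero _)
  have hT := isWeylTriple_partialX_partialU_mulU.dotProduct_X_X_pow_apply_mem
    (fun _ => vanishingOn_mem_invtSubmodule_dirDerivEnd hopen _)
    (fun _ => vanishingOn_mem_invtSubmodule_dirDerivEnd hopen _)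
    (fun _ => vanishingOn_mem_invtSubmodule_mulEnd _ _) hm (hB ▸ zero_mem _) hL
  exact (congrFun (lapl_iterate_slice g (k + 1) u) x).trans (hT ⟨hx, hu⟩)

end BosonicOperators

section Mollification

theorem exists_contDiff_hasCompactSupport_eqOn {E : Type*} [NormedAddCommGroup E]
    [InnerProductSpace ℝ E] [FiniteDimensional ℝ E] {n : ℕ∞} {O : Set E} (hO : IsOpen O) {a : E}
    {r R : ℝ} (hr : 0 < r) (hrR : r < R) (ha : closedBall a R ⊆ O) {c : E → ℝ}
    (hc : ContDiffOn ℝ n c O) :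
    ∃ d : E → ℝ, ContDiff ℝ n d ∧ HasCompactSupport d ∧ Set.EqOn d c (closedBall a r) := by
  let χ : ContDiffBump a := ⟨r, R, hr, hrR⟩
  refine ⟨fun x => χ x * c x, contDiff_iff_contDiffAt.2 fun x => ?_,
    χ.hasCompactSupport.mul_right, fun x hx => ?_⟩
  · by_cases hx : x ∈ O
    · exact χ.contDiff.contDiffAt.mul (hc.contDiffAt (hO.mem_nhds hx))
    · have hx' : x ∈ (tsupport χ)ᶜ := fun h => hx (ha (by rwa [χ.tsupport_eq] at h))
      refine (contDiffAt_const (c := (0 : ℝ))).congr_of_eventuallyEq ?_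
      filter_upwards [(isClosed_tsupport χ).isOpen_compl.mem_nhds hx'] with y hy
      rw [image_eq_zero_of_notMem_tsupport hy, zero_mul]
  · simp only [χ.one_of_mem_closedBall hx, one_mul]

theorem eventually_abs_normed_convolution_sub_le {G : Type*} [NormedAddCommGroup G]
    [InnerProductSpace ℝ G] [FiniteDimensional ℝ G] [MeasurableSpace G] [BorelSpace G]
    (μ : Measure G) [μ.IsAddHaarMeasure] {d : G → ℝ} (hd : Continuous d)
    (hds : HasCompactSupport d) {ε : ℝ} (hε : 0 < ε) :
    ∀ᶠ ρ in 𝓝[>] (0 : ℝ), ∀ φ : ContDiffBump (0 : G), φ.rOut ≤ ρ → ∀ x,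
      |(φ.normed μ ⋆[ContinuousLinearMap.lsmul ℝ ℝ, μ] d) x - d x| ≤ ε := by
  obtain ⟨δ, hδ, hdδ⟩ := Metric.uniformContinuous_iff.1
    (hds.uniformContinuous_of_continuous hd) ε hε
  filter_upwards [Ioo_mem_nhdsGT hδ] with ρ hρ φ hφ x
  exact φ.dist_normed_convolution_le hd.aestronglyMeasurable fun z hz =>
    (hdδ ((mem_ball.1 hz).trans_le (hφ.trans hρ.2.le))).le

variable {ι : Type*} [Fintype ι] {m : ℕ}

/-- The scalar constant-coefficient operator `∑ A_{ipq} ∂_p ∂_q c_i` of second order, acting on the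
vector-valued function `c`. -/
def secondOrderOp (A : ι × Fin m × Fin m → ℝ) (c : ι → Evec m → ℝ) (x : Evec m) : ℝ :=
  ∑ s, A s * pdv s.2.1 (pdv s.2.2 (c s.1)) x

theorem secondOrderOp_eq_of_eventuallyEq (A : ι × Fin m × Fin m → ℝ) {c d : ι → Evec m → ℝ}
    {x : Evec m} (h : ∀ i, c i =ᶠ[𝓝 x] d i) : secondOrderOp A c x = secondOrderOp A d x :=
  Finset.sum_congr rfl fun s _ => congrArg (A s * ·)
    (iterDirDeriv_eventuallyEq (h s.1)
      [EuclideanSpace.single s.2.1 1, EuclideanSpace.single s.2.2 1]).eq_of_nhds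

theorem secondOrderOp_convolution (A : ι × Fin m × Fin m → ℝ) {φ : Evec m → ℝ} (hφ : Continuous φ)
    {d : ι → Evec m → ℝ} (hd : ∀ i, ContDiff ℝ 2 (d i)) (hds : ∀ i, HasCompactSupport (d i)) :
    secondOrderOp A (fun i => φ ⋆ d i) = φ ⋆ secondOrderOp A d := by
  have hd1 (i : ι) (q : Fin m) : ContDiff ℝ 1 (pdv q (d i)) :=
    ((hd i).fderiv_right (m := 1) (by norm_num)).clm_apply contDiff_const
  have hds1 (i : ι) (q : Fin m) : HasCompactSupport (pdv q (d i)) := (hds i).fderiv_apply ℝ _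
  have hcont (s : ι × Fin m × Fin m) : Continuous (pdv s.2.1 (pdv s.2.2 (d s.1))) :=
    ((hd1 _ _).continuous_fderiv one_ne_zero).clm_apply continuous_const
  have hpdv (s : ι × Fin m × Fin m) : pdv s.2.1 (pdv s.2.2 (φ ⋆ d s.1)) =
      φ ⋆ pdv s.2.1 (pdv s.2.2 (d s.1)) :=
    (congrArg (pdv s.2.1) (dirDeriv_convolution hφ.locallyIntegrable
      ((hd s.1).of_le one_le_two) (hds s.1) _)).trans
      (dirDeriv_convolution hφ.locallyIntegrable (hd1 _ _) (hds1 _ _) _)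
  have hint (x : Evec m) (s : ι × Fin m × Fin m) :
      Integrable fun t => φ t * (A s * pdv s.2.1 (pdv s.2.2 (d s.1)) (x - t)) :=
    Continuous.integrable_of_hasCompactSupport
      (hφ.mul (((hcont s).comp (by fun_prop)).const_mul _)) <| HasCompactSupport.mul_left <|
        HasCompactSupport.mul_left <|
          ((hds1 s.1 s.2.2).fderiv_apply ℝ _).comp_homeomorph (Homeomorph.subLeft x)
  ext x
  simp only [secondOrderOp, hpdv, convolution_def, ContinuousLinearMap.lsmul_apply, smul_eq_mul,
    Finset.mul_sum]
  rw [integral_finsetSum _ fun s _ => hint x s]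
  simp only [mul_left_comm (φ _), integral_const_mul]

theorem normed_convolution_eq_zero {G : Type*} [NormedAddCommGroup G]
    [InnerProductSpace ℝ G] [FiniteDimensional ℝ G] [MeasurableSpace G] [BorelSpace G]
    {μ : Measure G} [μ.IsAddHaarMeasure] (φ : ContDiffBump (0 : G)) {D : G → ℝ} {x : G}
    (hD : ∀ z ∈ ball x φ.rOut, D z = 0) :
    (φ.normed μ ⋆[ContinuousLinearMap.lsmul ℝ ℝ, μ] D) x = 0 := by
  have hDx : D x = 0 := hD x (mem_ball_self φ.rOut_pos)
  rw [convolution_eq_right' _ φ.support_normed_eq.subset fun z hz => (hD z hz).trans hDx.symm]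
  simp [hDx]

/- Mollify: convolution commutes with constant-coefficient operators. -/
theorem exists_contDiff_approx_forall_secondOrderOp {O : Set (Evec m)} (hO : IsOpen O)
    {c : ι → Evec m → ℝ} (hc : ∀ i, ContDiffOn ℝ 2 (c i) O) {a : Evec m} {r : ℝ} (hr : 0 < r)
    (ha : closedBall a r ⊆ O) {ε : ℝ} (hε : 0 < ε) :
    ∃ h : ι → Evec m → ℝ, (∀ i, ContDiff ℝ ∞ (h i)) ∧
      (∀ i, ∀ x ∈ closedBall a r, |h i x - c i x| ≤ ε) ∧
      ∀ A, (∀ x ∈ O, secondOrderOp A c x = 0) → ∀ x ∈ ball a r, secondOrderOp A h x = 0 := by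
  obtain ⟨δ, hδ, hδO⟩ := (isCompact_closedBall a r).exists_cthickening_subset_open hO ha
  rw [cthickening_closedBall hδ.le hr.le] at hδO
  choose d hd hds hdc using fun i => exists_contDiff_hasCompactSupport_eqOn (n := 2) hO
    (r := δ / 2 + r) (by linarith) (by linarith) hδO (hc i)
  obtain ⟨ρ, happrox, hρ⟩ := ((eventually_all.2 fun i => eventually_abs_normed_convolution_sub_le
    volume (hd i).continuous (hds i) hε).and (Ioo_mem_nhdsGT (half_pos hδ))).exists
  let φ : ContDiffBump (0 : Evec m) := ⟨ρ / 2, ρ, half_pos hρ.1, half_lt_self hρ.1⟩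
  refine ⟨fun i => φ.normed volume ⋆ d i, fun i => ?_, fun i x hx => ?_, fun A hA x hx => ?_⟩
  · exact φ.hasCompactSupport_normed.contDiff_convolution_left _ φ.contDiff_normed
      (hd i).continuous.locallyIntegrable
  · rw [← hdc i (closedBall_subset_closedBall (by linarith) hx)]
    exact happrox i φ le_rfl x
  · rw [secondOrderOp_convolution A φ.continuous_normed hd hds]
    refine normed_convolution_eq_zero φ fun z hz => ?_
    have hz' : z ∈ ball a (δ / 2 + r) := by
      have hzx : dist z x < ρ := hz
      rw [mem_ball] at hx ⊢
      linarith [dist_triangle z x a, hρ.2]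
    rw [secondOrderOp_eq_of_eventuallyEq A fun i => eventually_of_mem
      (isOpen_ball.mem_nhds hz') fun y hy => hdc i (ball_subset_closedBall hy)]
    exact hA z (hδO (ball_subset_closedBall (ball_subset_ball (by linarith) hz')))

end Mollification

section UniformLimit

variable {E : Type*} [NormedAddCommGroup E] [NormedSpace ℝ E] [FiniteDimensional ℝ E]
  [MeasureSpace E] [BorelSpace E] [IsFiniteMeasureOnCompacts (volume : Measure E)]
  {ψ g h : E → ℝ} {a : E} {r : ℝ}

theorem IsUnitBallBump.integrable_dilationAverage (hψ : IsUnitBallBump ψ) (hr : 0 < r)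
    (hg : ContinuousOn g (closedBall a r)) : Integrable fun y => g (a + r • y) * ψ y := by
  have := FiniteDimensional.proper_real E
  have hmaps : Set.MapsTo (fun y => a + r • y) (closedBall 0 1) (closedBall a r) := fun y hy => by
    rw [mem_closedBall_zero_iff] at hy
    rw [mem_closedBall_iff_norm, add_sub_cancel_left, norm_smul, Real.norm_of_nonneg hr.le]
    exact mul_le_of_le_one_right hr.le hy
  have hcont : ContinuousOn (fun y => g (a + r • y) * ψ y) (closedBall 0 1) :=
    (hg.comp (by fun_prop) hmaps).mul hψ.contDiff.continuous.continuousOn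
  refine (integrableOn_iff_integrable_of_support_subset fun y hy => ?_).1
    (hcont.integrableOn_compact (isCompact_closedBall 0 1))
  by_contra hy1
  rw [mem_closedBall_zero_iff, not_le] at hy1
  exact hy (mul_eq_zero_of_right _ (hψ.eq_zero_of_one_le_norm y hy1.le))

theorem IsUnitBallBump.abs_dilationAverage_sub_le (hψ : IsUnitBallBump ψ) (hr : 0 < r)
    (hg : ContinuousOn g (closedBall a r)) (hh : ContinuousOn h (closedBall a r)) {ε : ℝ}
    (hgh : ∀ x ∈ closedBall a r, |g x - h x| ≤ ε) :
    |dilationAverage g ψ a r - dilationAverage h ψ a r| ≤ ε * ∫ y, |ψ y| := by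
  rw [dilationAverage, dilationAverage, ← integral_sub (hψ.integrable_dilationAverage hr hg)
    (hψ.integrable_dilationAverage hr hh), ← integral_const_mul, ← Real.norm_eq_abs]
  refine norm_integral_le_of_norm_le ((hψ.contDiff.continuous.integrable_of_hasCompactSupport
    hψ.hasCompactSupport).abs.const_mul ε) (.of_forall fun y => ?_)
  rw [← sub_mul, norm_mul, Real.norm_eq_abs, Real.norm_eq_abs]
  obtain hy | hy := le_or_gt 1 ‖y‖
  · simp [hψ.eq_zero_of_one_le_norm y hy]
  · gcongr
    exact hgh _ (ball_subset_closedBall (add_smul_mem_ball ⟨hr.le, le_rfl⟩ hr hy))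

theorem IsUnitBallBump.dilationAverage_eq_of_forall_approx (hψ : IsUnitBallBump ψ) (hr : 0 < r)
    (hg : ContinuousOn g (closedBall a r))
    (happrox : ∀ ε > 0, ∃ h, ContinuousOn h (closedBall a r) ∧
      (∀ x ∈ closedBall a r, |h x - g x| ≤ ε) ∧ dilationAverage h ψ a r = h a) :
    dilationAverage g ψ a r = g a := by
  have : 0 ≤ ∫ y, |ψ y| := integral_nonneg fun y => abs_nonneg (ψ y)
  refine eq_of_forall_dist_le fun ε hε => ?_
  obtain ⟨h, hh, hhg, hrep⟩ := happrox (ε / ((∫ y, |ψ y|) + 1)) (by positivity)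
  calc |dilationAverage g ψ a r - g a|
      ≤ |dilationAverage g ψ a r - dilationAverage h ψ a r| + |h a - g a| := by
        rw [hrep]
        exact abs_sub_le _ _ _
    _ ≤ ε / ((∫ y, |ψ y|) + 1) * (∫ y, |ψ y|) + ε / ((∫ y, |ψ y|) + 1) := by
        gcongr
        · exact hψ.abs_dilationAverage_sub_le hr hg hh fun x hx => abs_sub_comm (g x) _ ▸ hhg x hx
        · exact hhg a (mem_closedBall_self hr.le)
    _ = ε := by field_simp

end UniformLimit

section SeparatedSums

variable {ι : Type*} [Fintype ι] {m : ℕ} {O O' : Set (Evec m)} {c b : ι → Evec m → ℝ}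
  {f : Evec m → Evec m → ℝ}

theorem pd1_sum_mul (hO : IsOpen O) (hc : ∀ i, DifferentiableOn ℝ (c i) O)
    (hf : ∀ x ∈ O, ∀ u ∈ O', f x u = ∑ i, c i x * b i u) (p : Fin m) :
    ∀ x ∈ O, ∀ u ∈ O', pd1 p f x u = ∑ i, pdv p (c i) x * b i u := by
  intro x hx u hu
  have heq : (fun x => f x u) =ᶠ[𝓝 x] fun x => ∑ i, c i x * b i u :=
    eventually_of_mem (hO.mem_nhds hx) fun x hx => hf x hx u hu
  have hd (i : ι) : DifferentiableAt ℝ (c i) x := (hc i).differentiableAt (hO.mem_nhds hx)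
  rw [pd1, heq.fderiv_eq, fderiv_fun_sum fun i _ => (hd i).mul_const _, sum_apply]
  refine Finset.sum_congr rfl fun i _ => ?_
  rw [fderiv_mul_const (hd i), smul_apply, smul_eq_mul, mul_comm, pdv]

theorem pd2_sum_mul (hO' : IsOpen O') (hb : ∀ i, DifferentiableOn ℝ (b i) O')
    (hf : ∀ x ∈ O, ∀ u ∈ O', f x u = ∑ i, c i x * b i u) (p : Fin m) :
    ∀ x ∈ O, ∀ u ∈ O', pd2 p f x u = ∑ i, c i x * pdv p (b i) u := by
  intro x hx u hu
  simp only [mul_comm (c _ _)] at hf ⊢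
  exact pd1_sum_mul (f := fun u x => f x u) hO' hb (fun u hu x hx => hf x hx u hu) p u hu x hx

/-- The coefficients, indexed by `(i, p, q)`, with which the derivatives `∂_p ∂_q c_i` enter
`𝒟_k (∑ i, c_i(x) b_i(u))`. -/
def bosonicCoeff (m k : ℕ) (b : ι → Evec m → ℝ) (u : Evec m) (s : ι × Fin m × Fin m) : ℝ :=
  (if s.2.1 = s.2.2 then b s.1 u else 0)
    - 4 / ((m : ℝ) + 2 * k - 2) * (u s.2.1 * pdv s.2.2 (b s.1) u)
    + 4 * ‖u‖ ^ 2 / (((m : ℝ) + 2 * k - 2) * ((m : ℝ) + 2 * k - 4)) *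
      pdv s.2.1 (pdv s.2.2 (b s.1)) u

theorem secondOrderOp_bosonicCoeff (k : ℕ) (c : ι → Evec m → ℝ) (x u : Evec m) :
    secondOrderOp (bosonicCoeff m k b u) c x =
      ∑ p, ∑ i, pdv p (pdv p (c i)) x * b i u
        - 4 / ((m : ℝ) + 2 * k - 2) *
          ∑ p, ∑ q, u p * ∑ i, pdv p (pdv q (c i)) x * pdv q (b i) u
        + 4 * ‖u‖ ^ 2 / (((m : ℝ) + 2 * k - 2) * ((m : ℝ) + 2 * k - 4)) *
          ∑ p, ∑ q, ∑ i, pdv p (pdv q (c i)) x * pdv p (pdv q (b i)) u := by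
  have hdiag (p : Fin m) : ∑ i, pdv p (pdv p (c i)) x * b i u =
      ∑ q, ∑ i, if p = q then pdv p (pdv q (c i)) x * b i u else 0 := by
    rw [Finset.sum_comm]
    simp only [Finset.sum_ite_eq, Finset.mem_univ, if_true]
  rw [secondOrderOp, Fintype.sum_prod_type_right]
  simp only [hdiag, Fintype.sum_prod_type, Finset.mul_sum, ← Finset.sum_sub_distrib,
    ← Finset.sum_add_distrib]
  refine Finset.sum_congr rfl fun p _ => Finset.sum_congr rfl fun q _ =>
    Finset.sum_congr rfl fun i _ => ?_
  rw [bosonicCoeff]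
  split_ifs <;> ring

theorem Dk_sum_mul (hO : IsOpen O) (hO' : IsOpen O') (hc : ∀ i, ContDiffOn ℝ 2 (c i) O)
    (hb : ∀ i, ContDiff ℝ ∞ (b i)) (hf : ∀ x ∈ O, ∀ u ∈ O', f x u = ∑ i, c i x * b i u) (k : ℕ)
    {x u : Evec m} (hx : x ∈ O) (hu : u ∈ O') :
    Dk m k f x u = secondOrderOp (bosonicCoeff m k b u) c x := by
  have hc0 (i : ι) : DifferentiableOn ℝ (c i) O := (hc i).differentiableOn two_ne_zero
  have hc1 (q : Fin m) (i : ι) : DifferentiableOn ℝ (pdv q (c i)) O :=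
    (((hc i).fderiv_of_isOpen hO (m := 1) (by norm_num)).clm_apply
      contDiffOn_const).differentiableOn one_ne_zero
  have hb0 (i : ι) : DifferentiableOn ℝ (b i) O' :=
    ((hb i).differentiable (by simp)).differentiableOn
  have hb1 (q : Fin m) (i : ι) : DifferentiableOn ℝ (pdv q (b i)) O' :=
    ((contDiff_dirDeriv (hb i) _).differentiable (by simp)).differentiableOn
  have hpd1 (q : Fin m) := pd1_sum_mul hO hc0 hf q
  have hpd11 (q : Fin m) := pd1_sum_mul hO (hc1 q) (hpd1 q) q
  have hpd21 (q : Fin m) := pd2_sum_mul hO' hb0 (hpd1 q) q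
  have hpd121 (p q : Fin m) := pd1_sum_mul hO (hc1 q) (hpd21 q) p
  have hpd2121 (p q : Fin m) := pd2_sum_mul hO' (hb1 q) (hpd121 p q) p
  simp only [Dk, hpd11 _ x hx u hu, hpd121 _ _ x hx u hu, hpd2121 _ _ x hx u hu,
    secondOrderOp_bosonicCoeff]

end SeparatedSums

namespace C2Hk

variable {m k n : ℕ} {Ω : Set (Evec m)} {f : Evec m → Evec m → ℝ} {s : Fin n → Evec m}
  {b : Fin n → Evec m → ℝ} {x u : Evec m}

theorem eq_sum_apply_mul (hf : C2Hk m k Ω f) (hb : IsHkInterpolation m k s b) (hx : x ∈ Ω)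
    (hu : u ∈ ball (0 : Evec m) 1) : f x u = ∑ i, f x (s i) * b i u := by
  obtain ⟨q, hq, hfq⟩ := hf.2 x hx
  simp only [hfq u (ball_subset_closedBall hu), fun i => hfq (s i)
    (ball_subset_closedBall (hb.mem_ball i))]
  simpa only [Finset.sum_apply, Pi.smul_apply, smul_eq_mul] using congrFun (hb.eq_sum q hq) u

theorem contDiffOn_slice (hf : C2Hk m k Ω f) (hu : u ∈ ball (0 : Evec m) 1) :
    ContDiffOn ℝ 2 (fun x => f x u) Ω :=
  hf.1.comp (f := fun x => (x, u)) (contDiff_id.prodMk contDiff_const).contDiffOn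
    fun _ hx => ⟨hx, hu⟩

end C2Hk

/-- `f ∈ C²(Ω × 𝔹^m, ℋ_k)` is a null solution of the bosonic Laplacian `𝒟_k` on the open set `Ω`. -/
structure IsNullSolution (m k : ℕ) (Ω : Set (Evec m)) (f : Evec m → Evec m → ℝ) : Prop where
  isOpen : IsOpen Ω
  c2Hk : C2Hk m k Ω f
  Dk_eq_zero : ∀ x ∈ Ω, ∀ u ∈ ball (0 : Evec m) 1, Dk m k f x u = 0

namespace IsNullSolution

variable {m k : ℕ} {Ω : Set (Evec m)} {f : Evec m → Evec m → ℝ} {u a : Evec m}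
  {r : ℝ}

theorem exists_contDiff_approx (hf : IsNullSolution m k Ω f) (hr : 0 < r) (ha : closedBall a r ⊆ Ω)
    (hu : u ∈ ball (0 : Evec m) 1) {ε : ℝ} (hε : 0 < ε) :
    ∃ h : Evec m → Evec m → ℝ, ContDiff ℝ ∞ (Function.uncurry h) ∧
      IsHomogeneousSnd k (Function.uncurry h) ∧ (∀ x ∈ closedBall a r, |h x u - f x u| ≤ ε) ∧
      ∀ x ∈ ball a r, ∀ v ∈ ball (0 : Evec m) 1, Dk m k h x v = 0 := by
  obtain ⟨n, s, b, hb⟩ := exists_isHkInterpolation m k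
  have : 0 ≤ ∑ i, |b i u| := Finset.sum_nonneg fun i _ => abs_nonneg _
  obtain ⟨c, hc, hcf, hcD⟩ := exists_contDiff_approx_forall_secondOrderOp hf.isOpen
    (fun i => hf.c2Hk.contDiffOn_slice (hb.mem_ball i)) hr ha (ε := ε / (∑ i, |b i u| + 1))
    (by positivity)
  refine ⟨fun x v => ∑ i, c i x * b i v, ?_, fun t _ q => ?_, fun x hx => ?_, fun x hx v hv => ?_⟩
  · exact ContDiff.sum fun i _ => ((hc i).comp contDiff_fst).mul
      ((hb.isHk i).contDiff.comp contDiff_snd)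
  · simp only [Function.uncurry_apply_pair, Function.uncurry_def, (hb.isHk _).2.1, zpow_natCast,
      Finset.mul_sum, mul_left_comm]
  · rw [hf.c2Hk.eq_sum_apply_mul hb (ha hx) hu, ← Finset.sum_sub_distrib]
    calc |∑ i, (c i x * b i u - f x (s i) * b i u)|
        ≤ ∑ i, |c i x - f x (s i)| * |b i u| := by
          simpa only [← sub_mul, abs_mul] using Finset.abs_sum_le_sum_abs
            (fun i => c i x * b i u - f x (s i) * b i u) Finset.univ
      _ ≤ ∑ i, ε / (∑ i, |b i u| + 1) * |b i u| := by
          gcongr with i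
          exact hcf i x hx
      _ ≤ ε := by
          rw [← Finset.mul_sum, div_mul_eq_mul_div, div_le_iff₀ (by positivity)]
          gcongr
          exact le_add_of_nonneg_right zero_le_one
  · rw [Dk_sum_mul isOpen_univ isOpen_univ (fun i => ((hc i).of_le ENat.LEInfty.out).contDiffOn)
      (fun i => (hb.isHk i).contDiff) (fun _ _ _ _ => rfl) k trivial trivial]
    refine hcD _ (fun y hy => ?_) x hx
    rw [← Dk_sum_mul hf.isOpen isOpen_ball (fun i => hf.c2Hk.contDiffOn_slice (hb.mem_ball i))
      (fun i => (hb.isHk i).contDiff) (fun _ hy _ hw => hf.c2Hk.eq_sum_apply_mul hb hy hw) k hy hv]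
    exact hf.Dk_eq_zero y hy v hv

theorem dilationAverage_eq (hf : IsNullSolution m k Ω f)
    (hm : ∀ j ≤ k + 1, (m : ℝ) + 2 * k - 2 ≠ 2 * j) {ψ : Evec m → ℝ}
    (hψ : IsPolyharmonicKernel (k + 1) ψ) (hr : 0 < r) (ha : closedBall a r ⊆ Ω)
    (hu : u ∈ ball (0 : Evec m) 1) : dilationAverage (fun x => f x u) ψ a r = f a u := by
  refine hψ.toIsUnitBallBump.dilationAverage_eq_of_forall_approx (g := fun x => f x u) hr
    ((hf.c2Hk.contDiffOn_slice hu).continuousOn.mono ha) fun ε hε => ?_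
  obtain ⟨h, hh, hhom, hhf, hhD⟩ := hf.exists_contDiff_approx hr ha hu hε
  have hslice : ContDiff ℝ ∞ fun x => h x u :=
    hh.comp (contDiff_id.prodMk contDiff_const)
  exact ⟨fun x => h x u, hslice.continuous.continuousOn, hhf,
    hψ.dilationAverage_eq _ a r hslice hr fun x hx =>
      lapl_iterate_eq_zero_of_Dk_eq_zero hm hh hhom isOpen_ball isOpen_ball hhD hx hu⟩

end IsNullSolution

section MultiIndices

variable {m : ℕ}

/-- The multi-index `α` as a list of coordinate directions, the `i`-th one repeated `α i` times. -/
def multiDir (α : Fin m → ℕ) : List (Evec m) :=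
  (List.finRange m).flatMap fun i => List.replicate (α i) (EuclideanSpace.single i 1)

theorem length_multiDir (α : Fin m → ℕ) : (multiDir α).length = ∑ i, α i := by
  simp [multiDir, List.length_flatMap, Fin.sum_univ_def]

theorem iterDirDeriv_multiDir (α : Fin m → ℕ) (g : Evec m → ℝ) :
    iterDirDeriv (multiDir α) g = (List.finRange m).foldr (fun i g => (pdv i)^[α i] g) g := by
  have hiter (v : Evec m) (j : ℕ) (g : Evec m → ℝ) :
      (List.replicate j v).foldr dirDeriv g = (dirDeriv v)^[j] g := by
    induction j with
    | zero => rfl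
    | succ j ih => rw [List.replicate_succ, List.foldr_cons, ih, Function.iterate_succ_apply']
  rw [iterDirDeriv, multiDir, List.foldr_flatMap]
  simp only [hiter]
  rfl

theorem Dx_apply (α : Fin m → ℕ) (f : Evec m → Evec m → ℝ) (x u : Evec m) :
    Dx α f x u = iterDirDeriv (multiDir α) (fun x => f x u) x := by
  have hslice (i : Fin m) : Function.Semiconj (fun f x => f x u) (pd1 i) (pdv i) := fun _ => rfl
  rw [iterDirDeriv_multiDir, Dx]
  exact congrFun (List.foldr_hom (fun (f : Evec m → Evec m → ℝ) x => f x u)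
    fun i g => ((hslice i).iterate_right (α i) g).symm).symm x

theorem Dv_apply (β : Fin m → ℕ) (f : Evec m → Evec m → ℝ) (x u : Evec m) :
    Dv β f x u = iterDirDeriv (multiDir β) (f x) u := by
  have hslice (i : Fin m) : Function.Semiconj (fun f => f x) (pd2 i) (pdv i) := fun _ => rfl
  rw [iterDirDeriv_multiDir, Dv]
  exact congrFun (List.foldr_hom (fun f : Evec m → Evec m → ℝ => f x)
    fun i g => ((hslice i).iterate_right (β i) g).symm).symm u

end MultiIndices

section CauchyEstimates

variable {m k : ℕ} {Ω : Set (Evec m)} {f : Evec m → Evec m → ℝ} {p ψ η : Evec m → ℝ}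
  {u a ν₀ : Evec m} {r r₁ r₂ M : ℝ}

theorem IsHk.interior_estimate (hp : IsHk m k p) (hη : IsPolyharmonicKernel 1 η) (hr : 0 < r)
    (hM : ∀ x ∈ ball a r, |p x| ≤ M) (l : List (Evec m)) :
    |iterDirDeriv l p a| ≤ interiorConst η l * M / r ^ l.length :=
  (hη.interior_estimate_of_dilationAverage_eq hr hp.contDiff.continuous.continuousOn hM
    (fun x _ => hη.dilationAverage_eq p x _ hp.contDiff (half_pos hr) fun y _ => hp.2.2 y) l).2

namespace IsNullSolution

theorem interior_estimate_slice (hf : IsNullSolution m k Ω f)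
    (hm : ∀ j ≤ k + 1, (m : ℝ) + 2 * k - 2 ≠ 2 * j) (hψ : IsPolyharmonicKernel (k + 1) ψ)
    (hr : 0 < r) (ha : closedBall a r ⊆ Ω) (hu : u ∈ ball (0 : Evec m) 1)
    (hM : ∀ x ∈ ball a r, |f x u| ≤ M) (l : List (Evec m)) :
    ContDiffAt ℝ ∞ (fun x => f x u) a ∧
      |iterDirDeriv l (fun x => f x u) a| ≤ interiorConst ψ l * M / r ^ l.length := by
  refine hψ.interior_estimate_of_dilationAverage_eq hr ((hf.c2Hk.contDiffOn_slice hu).continuousOn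
    |>.mono (ball_subset_closedBall.trans ha)) hM (fun x hx => ?_) l
  exact hf.dilationAverage_eq hm hψ (half_pos hr)
    ((closedBall_subset_closedBall' (by linarith [mem_ball.1 hx])).trans ha) hu

theorem contDiffOn_infty_slice (hf : IsNullSolution m k Ω f)
    (hm : ∀ j ≤ k + 1, (m : ℝ) + 2 * k - 2 ≠ 2 * j) (hu : u ∈ ball (0 : Evec m) 1) :
    ContDiffOn ℝ ∞ (fun x => f x u) Ω := by
  intro x hx
  obtain ⟨ψ, hψ⟩ := exists_isPolyharmonicKernel m (k + 1)
  obtain ⟨r, hr, hrΩ⟩ := nhds_basis_closedBall.mem_iff.1 (hf.isOpen.mem_nhds hx)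
  obtain ⟨M, hM⟩ := (isCompact_closedBall x r).exists_bound_of_continuousOn
    ((hf.c2Hk.contDiffOn_slice hu).continuousOn.mono hrΩ)
  exact (hf.interior_estimate_slice hm hψ hr hrΩ hu
    (fun z hz => hM z (ball_subset_closedBall hz)) []).1.contDiffWithinAt

theorem contDiffOn_infty (hf : IsNullSolution m k Ω f)
    (hm : ∀ j ≤ k + 1, (m : ℝ) + 2 * k - 2 ≠ 2 * j) :
    ContDiffOn ℝ ∞ (fun q : Evec m × Evec m => f q.1 q.2) (Ω ×ˢ ball (0 : Evec m) 1) := by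
  obtain ⟨n, s, b, hb⟩ := exists_isHkInterpolation m k
  refine ContDiffOn.congr (f := fun q : Evec m × Evec m => ∑ i, f q.1 (s i) * b i q.2) ?_
    fun q hq => hf.c2Hk.eq_sum_apply_mul hb hq.1 hq.2
  exact ContDiffOn.sum fun i _ => ((hf.contDiffOn_infty_slice hm (hb.mem_ball i)).comp
    contDiff_fst.contDiffOn fun _ hq => hq.1).mul
      ((hb.isHk i).contDiff.comp contDiff_snd).contDiffOn

theorem exists_isHk_iterDirDeriv_eq (hf : IsNullSolution m k Ω f)
    (hm : ∀ j ≤ k + 1, (m : ℝ) + 2 * k - 2 ≠ 2 * j) (ha : a ∈ Ω) (l : List (Evec m)) :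
    ∃ p, IsHk m k p ∧ ∀ u ∈ ball (0 : Evec m) 1, iterDirDeriv l (fun x => f x u) a = p u := by
  obtain ⟨n, s, b, hb⟩ := exists_isHkInterpolation m k
  refine ⟨∑ i, iterDirDeriv l (fun x => f x (s i)) a • b i, (hkSubmodule m k).sum_mem fun i _ =>
    (hkSubmodule m k).smul_mem _ (hb.isHk i), fun u hu => ?_⟩
  have heq : (fun x => f x u) =ᶠ[𝓝 a] fun x => ∑ i, f x (s i) * b i u :=
    eventually_of_mem (hf.isOpen.mem_nhds ha) fun x hx => hf.c2Hk.eq_sum_apply_mul hb hx hu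
  rw [(iterDirDeriv_eventuallyEq heq l).eq_of_nhds, Finset.sum_apply]
  exact iterDirDeriv_sum_mul_const hf.isOpen
    (fun i _ => hf.contDiffOn_infty_slice hm (hb.mem_ball i)) (fun i => b i u) l ha

theorem cauchy_estimate (hf : IsNullSolution m k Ω f)
    (hm : ∀ j ≤ k + 1, (m : ℝ) + 2 * k - 2 ≠ 2 * j) (hψ : IsPolyharmonicKernel (k + 1) ψ)
    (hη : IsPolyharmonicKernel 1 η) (hr₁ : 0 < r₁) (hr₂ : 0 < r₂) (ha : closedBall a r₁ ⊆ Ω)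
    (hν₀ : closedBall ν₀ r₂ ⊆ ball 0 1) (hM : ∀ x ∈ ball a r₁, ∀ ν ∈ ball ν₀ r₂, |f x ν| ≤ M)
    (α β : Fin m → ℕ) :
    |Dv β (Dx α f) a ν₀| ≤ interiorConst ψ (multiDir α) * interiorConst η (multiDir β) * M /
      (r₁ ^ (∑ i, α i) * r₂ ^ (∑ i, β i)) := by
  obtain ⟨p, hp, hfp⟩ :=
    hf.exists_isHk_iterDirDeriv_eq hm (ha (mem_closedBall_self hr₁.le)) (multiDir α)
  have hpM : ∀ u ∈ ball ν₀ r₂,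
      |p u| ≤ interiorConst ψ (multiDir α) * M / r₁ ^ (multiDir α).length := fun u hu => by
    have hu' := hν₀ (ball_subset_closedBall hu)
    rw [← hfp u hu']
    exact (hf.interior_estimate_slice hm hψ hr₁ ha hu' (fun x hx => hM x hx u hu) _).2
  have hDx : Dx α f a =ᶠ[𝓝 ν₀] p :=
    eventually_of_mem (isOpen_ball.mem_nhds (hν₀ (mem_closedBall_self hr₂.le))) fun u hu =>
      (Dx_apply α f a u).trans (hfp u hu)
  calc |Dv β (Dx α f) a ν₀| = |iterDirDeriv (multiDir β) p ν₀| := by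
        rw [Dv_apply, (iterDirDeriv_eventuallyEq hDx _).eq_of_nhds]
    _ ≤ _ := hp.interior_estimate hη hr₂ hpM _
    _ = _ := by
        rw [length_multiDir, length_multiDir]
        field_simp

end IsNullSolution

end CauchyEstimates

theorem stmt_15_general (m k : ℕ) (hm : 4 < m ∨ Odd m) (α β : Fin m → ℕ) :
    ∃ c : ℝ, 0 < c ∧
      ∀ Ω : Set (Evec m), IsOpen Ω →
        ∀ f : Evec m → Evec m → ℝ, C2Hk m k Ω f →
          (∀ x ∈ Ω, ∀ u ∈ ball (0 : Evec m) 1, Dk m k f x u = 0) →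
          (ContDiffOn ℝ (⊤ : ℕ∞) (fun q : Evec m × Evec m => f q.1 q.2)
            (Ω ×ˢ ball (0 : Evec m) 1)) ∧
          ∀ (a ν₀ : Evec m) (r₁ r₂ : ℝ), 0 < r₁ → 0 < r₂ →
            closedBall a r₁ ⊆ Ω → closedBall ν₀ r₂ ⊆ ball (0 : Evec m) 1 →
            ∀ M : ℝ, (∀ x ∈ ball a r₁, ∀ ν ∈ ball ν₀ r₂, |f x ν| ≤ M) →
              |Dv β (Dx α f) a ν₀| ≤ c * M / (r₁ ^ (∑ i, α i) * r₂ ^ (∑ i, β i)) := by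
  have hmk : ∀ j ≤ k + 1, (m : ℝ) + 2 * k - 2 ≠ 2 * j := fun j hj h => by
    have hnat : m + 2 * k = 2 * j + 2 := by
      exact_mod_cast (by linarith : (m : ℝ) + 2 * k = 2 * j + 2)
    grind
  obtain ⟨ψ, hψ⟩ := exists_isPolyharmonicKernel m (k + 1)
  obtain ⟨η, hη⟩ := exists_isPolyharmonicKernel m 1
  have hC := mul_nonneg (interiorConst_nonneg ψ (multiDir α)) (interiorConst_nonneg η (multiDir β))
  refine ⟨_, add_pos_of_nonneg_of_pos hC one_pos, fun Ω hΩ f hf hD => ?_⟩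
  have hnull : IsNullSolution m k Ω f := ⟨hΩ, hf, hD⟩
  refine ⟨hnull.contDiffOn_infty hmk, fun a ν₀ r₁ r₂ hr₁ hr₂ ha hν₀ M hM => ?_⟩
  have hM0 : 0 ≤ M := (abs_nonneg _).trans (hM a (mem_ball_self hr₁) ν₀ (mem_ball_self hr₂))
  refine (hnull.cauchy_estimate hmk hψ hη hr₁ hr₂ ha hν₀ hM α β).trans ?_
  gcongr
  exact le_add_of_nonneg_right zero_le_one

/-- Cauchy's estimates for null solutions of the bosonic Laplacian,
`m > 4`, with a constant depending only on `α`, `β`, `m`, `k`. -/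
theorem stmt_15 (m k : ℕ) (hm : 4 < m) (hk : 1 ≤ k) (α β : Fin m → ℕ) :
    ∃ c : ℝ, 0 < c ∧
      ∀ Ω : Set (Evec m), IsOpen Ω →
        ∀ f : Evec m → Evec m → ℝ, C2Hk m k Ω f →
          (∀ x ∈ Ω, ∀ u ∈ ball (0 : Evec m) 1, Dk m k f x u = 0) →
          (ContDiffOn ℝ (⊤ : ℕ∞) (fun q : Evec m × Evec m => f q.1 q.2)
            (Ω ×ˢ ball (0 : Evec m) 1)) ∧
          ∀ (a ν₀ : Evec m) (r₁ r₂ : ℝ), 0 < r₁ → 0 < r₂ →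
            closedBall a r₁ ⊆ Ω → closedBall ν₀ r₂ ⊆ ball (0 : Evec m) 1 →
            ∀ M : ℝ, (∀ x ∈ ball a r₁, ∀ ν ∈ ball ν₀ r₂, |f x ν| ≤ M) →
              |Dv β (Dx α f) a ν₀| ≤ c * M / (r₁ ^ (∑ i, α i) * r₂ ^ (∑ i, β i)) :=
  stmt_15_general m k (.inl hm) α β
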